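/- Let k be an algebraically closed field of characteristic 2, let d ≥ 2, let A = k[[x_0,…,x_d]] be the formal power series ring with maximal ideal 𝔪 (the ideal generated by the variables), and let F ∈ 𝔪² with F ≠ 0 (so A/(F) is a non-regular hypersurface ring of dimension d). Then either there is a ring isomorphism A/(F) ≅ A/(Q_d), or the liminf as e → ∞ of the real sequence e ↦ dim_k( A/((F) + (x_0^{2^e},…,x_d^{2^e})) ) / 2^{d·e} is at least s_d, where s_d = (2^{m+1} + 1)/(2^{m+1} − 1) if d = 2m is even and s_d = (2^{m−1} + 1)/2^{m−1} if d = 2m − 1 is odd. (Here s_d = e_HK(S_{2,d}), the Hilbert–Kunz multiplicity of the A_2 singularity in characteristic 2, which strictly exceeds e_HK(R_{2,d}).) -/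

import Mathlib

open MvPowerSeries

/-- The Hilbert–Kunz function of the hypersurface `A/(F)`, where
`A = k[[x_0,…,x_d]]`, in characteristic `p`, at level `e`:
`dim_k A/((F) + (x_0^{p^e},…,x_d^{p^e}))`. -/
noncomputable def HKps (k : Type*) [Field k] (d p e : ℕ)
    (F : MvPowerSeries (Fin (d + 1)) k) : ℕ :=
  Module.finrank k
    (MvPowerSeries (Fin (d + 1)) k ⧸
      Ideal.span
        ({F} ∪ Set.range
          (fun i : Fin (d + 1) => (X i : MvPowerSeries (Fin (d + 1)) k) ^ p ^ e)))

/-- The defining equation `Q_d` of the `A₁` singularity in characteristic 2, as a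
power series: `Q_d = x_0x_1 + x_2x_3 + ⋯ + x_{d−1}x_d` for `d` odd and
`Q_d = x_0x_1 + ⋯ + x_{d−2}x_{d−1} + x_d²` for `d` even. -/
noncomputable def A1ps (k : Type*) [Field k] (d : ℕ) : MvPowerSeries (Fin (d + 1)) k :=
  (∑ i : Fin ((d + 1) / 2),
      (X (⟨2 * i, by omega⟩ : Fin (d + 1)) : MvPowerSeries (Fin (d + 1)) k) *
        X (⟨2 * i + 1, by omega⟩ : Fin (d + 1))) +
    if Even d then (X (⟨d, by omega⟩ : Fin (d + 1)) : MvPowerSeries (Fin (d + 1)) k) ^ 2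
    else 0

/-!
As long as the polar form of the quadratic part of `F` does not vanish, a hyperbolic plane `xy`
splits off from `F` up to a change of coordinates and a unit. If this can be continued to the end,
`F` is the `A₁` singularity. Otherwise one arrives at `Σ xᵢyᵢ + c(z)` where the quadratic part of
`c` is a sum of squares.

The colength of `F` modulo the powers `xᵢ ^ q` is upper semicontinuous along a line `F + t G`, so
replacing `c` by `c + t g` does not increase it, for all but finitely many `t`. This reduces the
lower bound to `Σ xᵢyᵢ + z ^ 3` if `d` is even, and to `Σ xᵢyᵢ + c(z₀, z₁)` with `c ∈ (z₀², z₁²)`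
if `d` is odd; in the second case the power of exponent `q / 2` is `Σ (xᵢyᵢ) ^ (q / 2)` modulo the
`q`-th powers.

For a sum of monomials in disjoint variables, multiplication on `A/(xᵢ ^ q)` is a sum of commuting
shifts of the monomial basis. Adding a diagonal operator whose eigenvalue at level `n` is the image
of the vector of binary digits of `n` under an additive embedding of `(ZMod 2) ^ e` into `k` makes
it diagonalizable with known eigenvalues. By semicontinuity again, the colength is at least the
number of monomials whose levels have digit vectors summing to zero, and the characters of
`(ZMod 2) ^ e` count these.
-/

namespace HilbertKunz

open Filter Topology
open Function.Embedding (inr inr_apply)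
open QuadraticMap (polar)

section Division

variable {σ R : Type*} [CommRing R]

/-- The part of a power series supported on the monomials whose exponents at all `i ∈ S` are
less than `q`; for `q = 1` this sets the variables in `S` to zero. -/
noncomputable def truncOn (S : Finset σ) (q : ℕ) : MvPowerSeries σ R →ₗ[R] MvPowerSeries σ R where
  toFun f p := if ∀ i ∈ S, p i < q then coeff p f else 0
  map_add' f g := by
    ext p
    change (if _ then coeff p (f + g) else 0) = (if _ then coeff p f else 0) + if _ then _ else 0
    split_ifs <;> simp
  map_smul' r f := by
    ext p
    change (if _ then coeff p (r • f) else 0) = r * if _ then coeff p f else 0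
    split_ifs <;> simp

lemma coeff_truncOn (S : Finset σ) (q : ℕ) (f : MvPowerSeries σ R) (p : σ →₀ ℕ) :
    coeff p (truncOn S q f) = if ∀ i ∈ S, p i < q then coeff p f else 0 := rfl

/-- Simultaneous division by the powers `X i ^ q`, `i ∈ S`. The quotients are obtained from `f` by
shifting and deleting coefficients, so they inherit any condition on the support of `f`. -/
theorem exists_eq_sum_X_pow_mul_add_truncOn (S : Finset σ) (q : ℕ)
    (f : MvPowerSeries σ R) :
    ∃ a : σ → MvPowerSeries σ R, f = ∑ i ∈ S, X i ^ q * a i + truncOn S q f ∧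
      ∀ i p, coeff p (a i) = 0 ∨ coeff p (a i) = coeff (p + Finsupp.single i q) f := by
  classical
  induction S using Finset.induction_on with
  | empty => exact ⟨0, by ext p; simp [coeff_truncOn], fun i p => Or.inl (by simp)⟩
  | insert i S hi ih =>
    obtain ⟨a, hfa, ha⟩ := ih
    obtain ⟨b, hb⟩ : X i ^ q ∣ truncOn S q f - truncOn (insert i S) q f := by
      rw [X_pow_dvd_iff]
      intro p hp
      simp [coeff_truncOn, hp]
    refine ⟨Function.update a i b, ?_, fun j p => ?_⟩
    · have hS : ∑ j ∈ S, X j ^ q * Function.update a i b j = ∑ j ∈ S, X j ^ q * a j :=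
        Finset.sum_congr rfl fun j hj => by
          rw [Function.update_of_ne (ne_of_mem_of_not_mem hj hi)]
      rw [Finset.sum_insert hi, hS, Function.update_self, ← hb]
      linear_combination hfa
    · obtain rfl | hj := eq_or_ne j i
      · have hp := congrArg (coeff (Finsupp.single j q + p)) hb
        rw [X_pow_eq, coeff_add_monomial_mul, one_mul, add_comm] at hp
        rw [Function.update_self, ← hp, map_sub, coeff_truncOn, coeff_truncOn]
        split_ifs with hS hins hins
        · exact Or.inl (sub_self _)
        · exact Or.inr (sub_zero _)
        · exact absurd (fun i hi => hins i (Finset.mem_insert_of_mem hi)) hS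
        · exact Or.inl (sub_self _)
      · rw [Function.update_of_ne hj]
        exact ha j p

end Division

section VarIdeal

variable {σ R : Type*} [CommRing R]

variable (σ R) in
/-- The ideal `𝔪` generated by the variables. -/
noncomputable def varIdeal : Ideal (MvPowerSeries σ R) := Ideal.span (Set.range X)

lemma X_mem_varIdeal (i : σ) : (X i : MvPowerSeries σ R) ∈ varIdeal σ R :=
  Ideal.subset_span ⟨i, rfl⟩

lemma coeff_eq_zero_of_mem_varIdeal_pow {n : ℕ} {f : MvPowerSeries σ R}
    (hf : f ∈ varIdeal σ R ^ n) {p : σ →₀ ℕ} (hp : p.degree < n) : coeff p f = 0 := by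
  suffices (n : ℕ∞) ≤ f.order from
    coeff_of_lt_order ((Nat.cast_lt.2 hp).trans_le this)
  clear hp
  induction n generalizing f with
  | zero => simp
  | succ n ih =>
    rw [pow_succ'] at hf
    refine Submodule.mul_induction_on hf (fun g hg h hh => ?_) fun g h hg hh =>
      (le_min hg hh).trans min_order_le_add
    have hg1 : 1 ≤ g.order := by
      rw [one_le_order_iff_constCoeff_eq_zero]
      refine (Ideal.span_le (I := RingHom.ker constantCoeff)).2 ?_ hg
      rintro _ ⟨i, rfl⟩
      exact constantCoeff_X i
    calc ((n + 1 : ℕ) : ℕ∞) = 1 + n := by push_cast; ring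
      _ ≤ g.order + h.order := add_le_add hg1 (ih hh)
      _ ≤ (g * h).order := le_order_mul

lemma exists_eq_sum_X_mul_of_mem_varIdeal_pow_succ [Fintype σ] {n : ℕ} {f : MvPowerSeries σ R}
    (hf : f ∈ varIdeal σ R ^ (n + 1)) :
    ∃ a : σ → MvPowerSeries σ R, f = ∑ i, X i * a i ∧ ∀ i, a i ∈ varIdeal σ R ^ n := by
  rw [pow_succ, ← smul_eq_mul, varIdeal, Submodule.mem_ideal_smul_span_iff_exists_sum] at hf
  obtain ⟨a, ha, hfa⟩ := hf
  refine ⟨a, ?_, ha⟩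
  rw [← hfa, Finsupp.sum_fintype a _ fun i => zero_smul _ (X i)]
  exact Finset.sum_congr rfl fun i _ => mul_comm _ _

variable [Finite σ]

theorem mem_varIdeal_pow_iff {n : ℕ} {f : MvPowerSeries σ R} :
    f ∈ varIdeal σ R ^ n ↔ ∀ p : σ →₀ ℕ, p.degree < n → coeff p f = 0 := by
  classical
  have := Fintype.ofFinite σ
  refine ⟨fun hf p => coeff_eq_zero_of_mem_varIdeal_pow hf, fun hf => ?_⟩
  induction n generalizing f with
  | zero => simp
  | succ n ih =>
    obtain ⟨a, hfa, ha⟩ := exists_eq_sum_X_pow_mul_add_truncOn Finset.univ 1 f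
    have htrunc : truncOn Finset.univ 1 f = 0 := by
      ext p
      rw [coeff_truncOn, map_zero]
      split_ifs with hp
      · obtain rfl : p = 0 := by ext i; simpa using hp i (Finset.mem_univ i)
        exact hf 0 (by simp)
      · rfl
    rw [hfa, htrunc, add_zero, pow_succ']
    refine sum_mem fun i _ => Ideal.mul_mem_mul ?_ (ih fun p hp => ?_)
    · rw [pow_one]
      exact X_mem_varIdeal i
    obtain h | h := ha i p
    · exact h
    · exact h.trans (hf _ (by simpa using hp))

lemma mem_varIdeal_iff {f : MvPowerSeries σ R} : f ∈ varIdeal σ R ↔ constantCoeff f = 0 := by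
  rw [← pow_one (varIdeal σ R), mem_varIdeal_pow_iff, ← coeff_zero_eq_constantCoeff_apply]
  simp [Finsupp.degree_eq_zero_iff]

lemma sub_C_constantCoeff_mem_varIdeal (f : MvPowerSeries σ R) :
    f - C (constantCoeff f) ∈ varIdeal σ R := by
  simp [mem_varIdeal_iff]

lemma eq_zero_of_forall_mem_varIdeal_pow {f : MvPowerSeries σ R}
    (hf : ∀ n, f ∈ varIdeal σ R ^ n) : f = 0 := by
  ext p
  exact mem_varIdeal_pow_iff.1 (hf (p.degree + 1)) p (Nat.lt_succ_self _)

lemma exists_forall_sub_mem_varIdeal_pow (f : ℕ → MvPowerSeries σ R)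
    (hf : ∀ n, f (n + 1) - f n ∈ varIdeal σ R ^ n) :
    ∃ g, ∀ n, g - f n ∈ varIdeal σ R ^ n := by
  have htail (n j : ℕ) : f (n + j) - f n ∈ varIdeal σ R ^ n := by
    induction j with
    | zero => simp
    | succ j ih =>
      have hstep := Ideal.pow_le_pow_right (Nat.le_add_right n j) (hf (n + j))
      simpa [add_assoc] using add_mem hstep ih
  let g : MvPowerSeries σ R := fun p => coeff p (f (p.degree + 1))
  have hg (p : σ →₀ ℕ) : coeff p g = coeff p (f (p.degree + 1)) := rfl
  refine ⟨g, fun n => mem_varIdeal_pow_iff.2 fun p hp => ?_⟩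
  obtain ⟨j, rfl⟩ := Nat.exists_eq_add_of_le (Nat.succ_le_of_lt hp)
  have := mem_varIdeal_pow_iff.1 (htail (p.degree + 1) j) p (Nat.lt_succ_self _)
  rw [map_sub, sub_eq_zero] at this ⊢
  rw [hg, this]

/-- Successive approximation: `P n s` says that `s` is an approximate solution of order `n`. -/
theorem exists_forall_approximation {τ : Type*} (P : ℕ → (τ → MvPowerSeries σ R) → Prop)
    (hzero : ∃ s, P 0 s)
    (hsucc : ∀ n s, P n s → ∃ s', P (n + 1) s' ∧ ∀ i, s' i - s i ∈ varIdeal σ R ^ n) :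
    ∃ s : τ → MvPowerSeries σ R, ∀ n, ∃ s', P n s' ∧ ∀ i, s i - s' i ∈ varIdeal σ R ^ n := by
  obtain ⟨s₀, hs₀⟩ := hzero
  choose! next hnext hsub using hsucc
  let s (n : ℕ) : τ → MvPowerSeries σ R := Nat.rec s₀ next n
  have hs (n : ℕ) : P n (s n) := by
    induction n with
    | zero => exact hs₀
    | succ n ih => exact hnext n _ ih
  choose g hg using fun i => exists_forall_sub_mem_varIdeal_pow (fun n => s n i)
    fun n => hsub n _ (hs n) i
  exact ⟨g, fun n => ⟨s n, hs n, fun i => hg i n⟩⟩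

end VarIdeal

section LinearAlgebra

variable {k V : Type*} [Field k] [AddCommGroup V] [Module k V] [FiniteDimensional k V]

lemma finite_setOf_not_injective_one_add_smul (h : Module.End k V) :
    {t : k | ¬Function.Injective (1 + t • h : Module.End k V)}.Finite := by
  refine (h.finite_hasEigenvalue.image fun μ => -μ⁻¹).subset fun t ht => ?_
  obtain ⟨v, hv, hv0⟩ : ∃ v, (1 + t • h : Module.End k V) v = 0 ∧ v ≠ 0 := by
    simpa [injective_iff_map_eq_zero] using ht
  have hv' : t • h v = -v := eq_neg_of_add_eq_zero_right hv
  have ht0 : t ≠ 0 := by rintro rfl; simp_all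
  refine ⟨-t⁻¹, Module.End.hasEigenvalue_of_hasEigenvector (x := v)
    ⟨Module.End.mem_eigenspace_iff.2 ?_, hv0⟩, by simp [inv_neg]⟩
  rw [neg_smul, ← smul_neg, ← hv', smul_smul, inv_mul_cancel₀ ht0, one_smul]

theorem finite_setOf_finrank_ker_lt_finrank_ker_add_smul (f g : Module.End k V) :
    {t : k | Module.finrank k f.ker < Module.finrank k (f + t • g).ker}.Finite := by
  obtain ⟨U, hU⟩ := f.ker.exists_isCompl
  have hinj : (f ∘ₗ U.subtype).ker = ⊥ := by
    rw [LinearMap.ker_comp, ← Submodule.disjoint_iff_comap_eq_bot]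
    exact hU.disjoint.symm
  obtain ⟨L, hL⟩ := LinearMap.exists_leftInverse_of_injective _ hinj
  let h : Module.End k U := L ∘ₗ g ∘ₗ U.subtype
  refine (finite_setOf_not_injective_one_add_smul h).subset fun t ht hinj_t => ?_
  have hcomp : L ∘ₗ (f + t • g) ∘ₗ U.subtype = 1 + t • h := by
    rw [LinearMap.add_comp, LinearMap.comp_add, hL, LinearMap.smul_comp, LinearMap.comp_smul]
    rfl
  have hdisj : Disjoint (f + t • g).ker U := by
    rw [Submodule.disjoint_def]
    intro u hu huU
    have : (1 + t • h : Module.End k U) ⟨u, huU⟩ = 0 := by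
      rw [← hcomp, LinearMap.comp_apply, LinearMap.comp_apply, Submodule.subtype_apply,
        LinearMap.mem_ker.1 hu, map_zero]
    exact congrArg Subtype.val (hinj_t (this.trans (map_zero _).symm))
  have h₁ := Submodule.finrank_add_finrank_le_of_disjoint hdisj
  have h₂ := Submodule.finrank_add_eq_of_isCompl hU
  exact absurd ht (by simp only [Set.mem_ofPred_eq]; lia)

lemma finrank_ker_mul_le (f g : Module.End k V) :
    Module.finrank k (f * g).ker ≤ Module.finrank k f.ker + Module.finrank k g.ker := by
  have h := LinearMap.finrank_range_add_finrank_ker (g.domRestrict (f * g).ker)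
  rw [← h]
  gcongr
  · refine Submodule.finrank_mono ?_
    rintro _ ⟨⟨v, hv⟩, rfl⟩
    exact hv
  · rw [LinearMap.ker_domRestrict]
    exact (Submodule.finrank_map_subtype_eq _ _).symm.trans_le
      (Submodule.finrank_mono (by simp [Submodule.map_comap_subtype]))

theorem finrank_ker_pow_le (f : Module.End k V) (n : ℕ) :
    Module.finrank k (f ^ n).ker ≤ n * Module.finrank k f.ker := by
  induction n with
  | zero => simp [Module.End.one_eq_id]
  | succ n ih =>
    rw [pow_succ, add_mul, one_mul]
    exact (finrank_ker_mul_le _ _).trans (by gcongr)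

end LinearAlgebra

section PowIdeal

variable {σ R : Type*} [CommRing R]

variable (σ R) in
/-- The ideal `(x_i ^ q : i)`, i.e. a Frobenius power of `𝔪` when `q` is a power of the
characteristic. -/
noncomputable def powIdeal (q : ℕ) : Ideal (MvPowerSeries σ R) :=
  Ideal.span (Set.range fun i => X i ^ q)

lemma X_pow_mem_powIdeal (i : σ) (q : ℕ) : (X i : MvPowerSeries σ R) ^ q ∈ powIdeal σ R q :=
  Ideal.subset_span ⟨i, rfl⟩

theorem mem_powIdeal_iff [Finite σ] {q : ℕ} {f : MvPowerSeries σ R} :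
    f ∈ powIdeal σ R q ↔ ∀ p : σ →₀ ℕ, (∀ i, p i < q) → coeff p f = 0 := by
  have := Fintype.ofFinite σ
  refine ⟨fun hf p hp => ?_, fun hf => ?_⟩
  · obtain ⟨a, rfl⟩ := (Submodule.mem_span_range_iff_exists_fun _).1 hf
    rw [map_sum]
    refine Finset.sum_eq_zero fun i _ => ?_
    exact X_pow_dvd_iff.1 (dvd_mul_left (X i ^ q) (a i)) p (hp i)
  · obtain ⟨a, hfa, -⟩ := exists_eq_sum_X_pow_mul_add_truncOn Finset.univ q f
    have htrunc : truncOn Finset.univ q f = 0 := by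
      ext p
      rw [coeff_truncOn, map_zero]
      split_ifs with hp
      · exact hf p fun i => hp i (Finset.mem_univ i)
      · rfl
    rw [hfa, htrunc, add_zero]
    exact sum_mem fun i _ => Ideal.mul_mem_right _ _ (X_pow_mem_powIdeal i q)

variable (σ R) in
/-- The truncated power series ring `A/(x_i ^ q : i)`. -/
abbrev PowQuotient (q : ℕ) : Type _ := MvPowerSeries σ R ⧸ powIdeal σ R q

lemma mk_monomial_eq_zero {q : ℕ} {p : σ →₀ ℕ} {i : σ} (hi : q ≤ p i) :
    (Ideal.Quotient.mk (powIdeal σ R q)) (monomial p 1) = 0 := by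
  rw [Ideal.Quotient.eq_zero_iff_mem, ← add_tsub_cancel_of_le (Finsupp.single_le_iff.2 hi),
    ← one_mul (1 : R), ← monomial_mul_monomial, ← X_pow_eq]
  exact Ideal.mul_mem_right _ _ (X_pow_mem_powIdeal i q)

end PowIdeal

section MonomialBasis

variable {σ k : Type*} [Finite σ] [Field k] {q : ℕ}

/-- A point of the box `[0, q)^σ`, viewed as an exponent. -/
noncomputable def boxExponent (a : σ → Fin q) : σ →₀ ℕ :=
  Finsupp.equivFunOnFinite.symm fun i => a i

@[simp]
lemma boxExponent_apply (a : σ → Fin q) (i : σ) : boxExponent a i = a i := rfl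

lemma boxExponent_injective : Function.Injective (boxExponent : (σ → Fin q) → σ →₀ ℕ) :=
  fun _ _ h => funext fun i => Fin.ext (DFunLike.congr_fun h i)

lemma exists_boxExponent_eq {p : σ →₀ ℕ} (hp : ∀ i, p i < q) :
    ∃ a : σ → Fin q, boxExponent a = p :=
  ⟨fun i => ⟨p i, hp i⟩, Finsupp.ext fun _ => rfl⟩

variable (σ k q) in
/-- The coefficients of a power series at the exponents in the box `[0, q)^σ`. -/
noncomputable def boxCoeff : MvPowerSeries σ k →ₗ[k] ((σ → Fin q) → k) :=
  LinearMap.pi fun a => coeff (boxExponent a)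

lemma ker_boxCoeff :
    (boxCoeff σ k q).ker = (powIdeal σ k q).restrictScalars k := by
  ext f
  rw [LinearMap.mem_ker, Submodule.restrictScalars_mem, mem_powIdeal_iff, funext_iff]
  refine ⟨fun hf p hp => ?_, fun hf a => hf _ fun i => (a i).2⟩
  obtain ⟨a, rfl⟩ := exists_boxExponent_eq hp
  exact hf a

lemma boxCoeff_monomial [DecidableEq (σ → Fin q)] (a : σ → Fin q) :
    boxCoeff σ k q (monomial (boxExponent a) 1) = Pi.single a 1 := by
  classical
  ext b
  simp [boxCoeff, coeff_monomial, Pi.single_apply, boxExponent_injective.eq_iff]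

lemma boxCoeff_surjective : Function.Surjective (boxCoeff σ k q) := by
  classical
  have := Fintype.ofFinite σ
  intro v
  refine ⟨∑ a, v a • monomial (boxExponent a) 1, ?_⟩
  simp_rw [map_sum, map_smul, boxCoeff_monomial]
  simpa [Pi.basisFun_apply] using (Pi.basisFun k _).sum_repr v

variable (σ k q) in
/-- The classes of the monomials with exponents in `[0, q)^σ`, as a basis of `A/(x_i ^ q : i)`. -/
noncomputable def monomialBasis : Module.Basis (σ → Fin q) k (PowQuotient σ k q) :=
  .ofEquivFun ((Submodule.Quotient.restrictScalarsEquiv k (powIdeal σ k q)).symm ≪≫ₗ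
    Submodule.quotEquivOfEq _ _ ker_boxCoeff.symm ≪≫ₗ
    (boxCoeff σ k q).quotKerEquivOfSurjective boxCoeff_surjective)

lemma monomialBasis_apply (a : σ → Fin q) :
    monomialBasis σ k q a = Ideal.Quotient.mk _ (monomial (boxExponent a) 1) := by
  classical
  rw [monomialBasis, Module.Basis.coe_ofEquivFun, LinearEquiv.symm_apply_eq]
  exact (boxCoeff_monomial a).symm

instance : FiniteDimensional k (PowQuotient σ k q) :=
  (monomialBasis σ k q).finiteDimensional_of_finite

lemma finrank_powQuotient : Module.finrank k (PowQuotient σ k q) = q ^ Nat.card σ := by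
  have := Fintype.ofFinite σ
  classical
  rw [Module.finrank_eq_card_basis (monomialBasis σ k q), Fintype.card_fun, Fintype.card_fin,
    Nat.card_eq_fintype_card]

end MonomialBasis

section Colength

variable {σ k : Type*} [Field k]

/-- The dimension of `A/((F) + (x_i ^ q : i))`. For `q = p ^ e` this is the Hilbert–Kunz function
of `A/(F)` in characteristic `p`. -/
noncomputable def colength (q : ℕ) (F : MvPowerSeries σ k) : ℕ :=
  Module.finrank k
    (MvPowerSeries σ k ⧸ Ideal.span ({F} ∪ Set.range fun i => (X i : MvPowerSeries σ k) ^ q))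

/-- Multiplication by `F` on `A/(x_i ^ q : i)`. -/
noncomputable def mulEnd (q : ℕ) (F : MvPowerSeries σ k) : Module.End k (PowQuotient σ k q) :=
  LinearMap.mulLeft k (Ideal.Quotient.mk _ F)

lemma mulEnd_mk (q : ℕ) (F G : MvPowerSeries σ k) :
    mulEnd q F (Ideal.Quotient.mk _ G) = Ideal.Quotient.mk _ (F * G) := rfl

variable [Finite σ]

theorem colength_add_finrank_range_mulEnd (q : ℕ) (F : MvPowerSeries σ k) :
    colength q F + Module.finrank k (mulEnd q F).range = q ^ Nat.card σ := by
  have hcolength : colength q F =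
      Module.finrank k (PowQuotient σ k q ⧸ Ideal.span {Ideal.Quotient.mk (powIdeal σ k q) F}) := by
    rw [colength, Ideal.span_union, ← powIdeal, sup_comm,
      ← (DoubleQuot.quotQuotEquivQuotSupₐ k _ _).toLinearEquiv.finrank_eq, Ideal.map_span,
      Set.image_singleton]
    rfl
  have hrange : (mulEnd q F).range =
      (Ideal.span {Ideal.Quotient.mk (powIdeal σ k q) F}).restrictScalars k := by
    ext g
    rw [Submodule.restrictScalars_mem, Ideal.mem_span_singleton]
    exact ⟨fun ⟨a, ha⟩ => ⟨a, ha.symm⟩, fun ⟨a, ha⟩ => ⟨a, ha.symm⟩⟩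
  rw [hcolength, hrange, ← finrank_powQuotient (k := k), ← Submodule.finrank_quotient_add_finrank
    ((Ideal.span {Ideal.Quotient.mk (powIdeal σ k q) F}).restrictScalars k),
    (Submodule.Quotient.restrictScalarsEquiv k _).finrank_eq]

theorem colength_eq_finrank_ker (q : ℕ) (F : MvPowerSeries σ k) :
    colength q F = Module.finrank k (mulEnd q F).ker := by
  have h₁ := colength_add_finrank_range_mulEnd q F
  have h₂ := (mulEnd q F).finrank_range_add_finrank_ker
  rw [finrank_powQuotient] at h₂
  lia

lemma colength_congr {q : ℕ} {F G : MvPowerSeries σ k} (h : F - G ∈ powIdeal σ k q) :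
    colength q F = colength q G := by
  rw [colength_eq_finrank_ker, colength_eq_finrank_ker, mulEnd, mulEnd, Ideal.Quotient.eq.2 h]

theorem colength_pow_le (q n : ℕ) (F : MvPowerSeries σ k) :
    colength q (F ^ n) ≤ n * colength q F := by
  rw [colength_eq_finrank_ker, colength_eq_finrank_ker, mulEnd, map_pow, ← LinearMap.pow_mulLeft]
  exact finrank_ker_pow_le _ n

theorem finite_setOf_colength_lt_colength_add_smul (q : ℕ) (F G : MvPowerSeries σ k) :
    {t : k | colength q F < colength q (F + t • G)}.Finite := by
  have hadd (t : k) : mulEnd q (F + t • G) = mulEnd q F + t • mulEnd q G := by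
    refine LinearMap.ext fun a => ?_
    have hmk : Ideal.Quotient.mk (powIdeal σ k q) (F + t • G) =
      Ideal.Quotient.mk _ F + t • Ideal.Quotient.mk _ G := rfl
    rw [mulEnd, LinearMap.mulLeft_apply, hmk, add_mul, smul_mul_assoc]
    rfl
  refine (finite_setOf_finrank_ker_lt_finrank_ker_add_smul (mulEnd q F) (mulEnd q G)).subset
    fun t ht => ?_
  rwa [Set.mem_ofPred_eq, ← hadd, ← colength_eq_finrank_ker, ← colength_eq_finrank_ker]

lemma exists_ne_zero_colength_add_smul_le [Infinite k] (q : ℕ) (F G : MvPowerSeries σ k) :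
    ∃ t : k, t ≠ 0 ∧ colength q (F + t • G) ≤ colength q F := by
  obtain ⟨t, ht⟩ := ((finite_setOf_colength_lt_colength_add_smul q F G).union
    (Set.finite_singleton 0)).infinite_compl.nonempty
  simp only [Set.mem_compl_iff, Set.mem_union, Set.mem_ofPred_eq, not_or, not_lt] at ht
  exact ⟨t, ht.2, ht.1⟩

end Colength

section AlgHom

variable {σ τ k : Type*} [Finite σ] [Field k]

lemma isUnit_iff_notMem_varIdeal {f : MvPowerSeries σ k} : IsUnit f ↔ f ∉ varIdeal σ k := by
  rw [isUnit_iff_constantCoeff, isUnit_iff_ne_zero, mem_varIdeal_iff]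

lemma exists_eq_C_add_sum_X_mul [Fintype σ] (f : MvPowerSeries σ k) :
    ∃ a : σ → MvPowerSeries σ k, f = C (constantCoeff f) + ∑ i, X i * a i := by
  have hf := sub_C_constantCoeff_mem_varIdeal f
  rw [← pow_one (varIdeal σ k)] at hf
  obtain ⟨a, ha, -⟩ := exists_eq_sum_X_mul_of_mem_varIdeal_pow_succ (n := 0) hf
  exact ⟨a, by rw [← ha]; ring⟩

lemma exists_algHom_X_eq [Finite τ] (ξ : σ → MvPowerSeries τ k) (hξ : ∀ i, ξ i ∈ varIdeal τ k) :
    ∃ φ : MvPowerSeries σ k →ₐ[k] MvPowerSeries τ k, ∀ i, φ (X i) = ξ i :=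
  have hsubst : HasSubst ξ := hasSubst_of_constantCoeff_zero fun i => mem_varIdeal_iff.1 (hξ i)
  ⟨substAlgHom hsubst, substAlgHom_X hsubst⟩

/-- Every `k`-algebra homomorphism is local: if `φ (X i)` had constant coefficient `c ≠ 0`, then
the unit `X i - c` would be mapped to a non-unit. -/
lemma map_X_mem_varIdeal [Finite τ] (φ : MvPowerSeries σ k →ₐ[k] MvPowerSeries τ k) (i : σ) :
    φ (X i) ∈ varIdeal τ k := by
  rw [mem_varIdeal_iff]
  by_contra hc
  have hunit : IsUnit (X i - C (constantCoeff (φ (X i))) : MvPowerSeries σ k) := by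
    simpa [isUnit_iff_notMem_varIdeal, mem_varIdeal_iff] using hc
  refine isUnit_iff_notMem_varIdeal.1 (hunit.map φ) ?_
  rw [map_sub]
  exact (φ.commutes (constantCoeff (φ (X i)))).symm ▸ sub_C_constantCoeff_mem_varIdeal (φ (X i))

lemma map_mem_varIdeal_pow [Finite τ] (φ : MvPowerSeries σ k →ₐ[k] MvPowerSeries τ k) {n : ℕ}
    {f : MvPowerSeries σ k} (hf : f ∈ varIdeal σ k ^ n) : φ f ∈ varIdeal τ k ^ n := by
  have hle : (varIdeal σ k).map φ ≤ varIdeal τ k := by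
    rw [varIdeal, Ideal.map_span, Ideal.span_le]
    rintro _ ⟨_, ⟨i, rfl⟩, rfl⟩
    exact map_X_mem_varIdeal φ i
  refine Ideal.pow_right_mono hle n ?_
  rw [← Ideal.map_pow]
  exact Ideal.mem_map_of_mem φ hf

theorem algHom_ext [Finite τ] {φ ψ : MvPowerSeries σ k →ₐ[k] MvPowerSeries τ k}
    (h : ∀ i, φ (X i) = ψ (X i)) : φ = ψ := by
  have := Fintype.ofFinite σ
  suffices ∀ n f, φ f - ψ f ∈ varIdeal τ k ^ n from
    AlgHom.ext fun f => sub_eq_zero.1 (eq_zero_of_forall_mem_varIdeal_pow fun n => this n f)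
  intro n
  induction n with
  | zero => simp
  | succ n ih =>
    intro f
    obtain ⟨a, ha⟩ := exists_eq_C_add_sum_X_mul f
    have hC (c : k) : φ (C c) = ψ (C c) := (φ.commutes c).trans (ψ.commutes c).symm
    have hsub : φ f - ψ f = ∑ i, φ (X i) * (φ (a i) - ψ (a i)) := by
      rw [ha]
      simp only [map_add, map_sum, map_mul, hC, h, mul_sub, Finset.sum_sub_distrib]
      ring
    rw [hsub, pow_succ']
    exact sum_mem fun i _ => Ideal.mul_mem_mul (map_X_mem_varIdeal φ i) (ih (a i))

end AlgHom

section Endomorphism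

variable {σ k : Type*} [Finite σ] [Field k] (φ : MvPowerSeries σ k →ₐ[k] MvPowerSeries σ k)

lemma map_sub_mem_varIdeal_pow_succ (hφ : ∀ i, φ (X i) - X i ∈ varIdeal σ k ^ 2) {n : ℕ}
    {f : MvPowerSeries σ k} (hf : f ∈ varIdeal σ k ^ n) : φ f - f ∈ varIdeal σ k ^ (n + 1) := by
  have := Fintype.ofFinite σ
  induction n generalizing f with
  | zero =>
    have hmem := sub_C_constantCoeff_mem_varIdeal f
    rw [← pow_one (varIdeal σ k)] at hmem
    have hdiff := sub_mem (map_mem_varIdeal_pow φ hmem) hmem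
    have hC : φ (C (constantCoeff f)) = C (constantCoeff f) := φ.commutes _
    rw [map_sub, hC, sub_sub_sub_cancel_right] at hdiff
    exact hdiff
  | succ n ih =>
    obtain ⟨a, rfl, ha⟩ := exists_eq_sum_X_mul_of_mem_varIdeal_pow_succ hf
    have hsum : φ (∑ i, X i * a i) - ∑ i, X i * a i =
        ∑ i, ((φ (X i) - X i) * φ (a i) + X i * (φ (a i) - a i)) := by
      simp only [map_sum, map_mul, ← Finset.sum_sub_distrib]
      exact Finset.sum_congr rfl fun i _ => by ring
    rw [hsum]
    refine sum_mem fun i _ => add_mem ?_ ?_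
    · rw [show n + 1 + 1 = 2 + n by ring, pow_add]
      exact Ideal.mul_mem_mul (hφ i) (map_mem_varIdeal_pow φ (ha i))
    · rw [pow_succ']
      exact Ideal.mul_mem_mul (X_mem_varIdeal i) (ih (ha i))

theorem bijective_of_map_X_sub_X_mem (hφ : ∀ i, φ (X i) - X i ∈ varIdeal σ k ^ 2) :
    Function.Bijective φ := by
  refine ⟨(injective_iff_map_eq_zero φ).2 fun f hf => ?_, fun g => ?_⟩
  · refine eq_zero_of_forall_mem_varIdeal_pow fun n => ?_
    induction n with
    | zero => simp
    | succ n ih =>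
      simpa [hf] using map_sub_mem_varIdeal_pow_succ φ hφ ih
  · obtain ⟨s, hs⟩ := exists_forall_approximation (τ := Unit)
      (fun n s => g - φ (s ()) ∈ varIdeal σ k ^ n) ⟨0, by simp⟩ fun n s hs =>
        ⟨fun _ => s () + (g - φ (s ())), by
          have := neg_mem (map_sub_mem_varIdeal_pow_succ φ hφ hs)
          rwa [neg_sub, sub_sub, ← map_add] at this, fun _ => by simpa using hs⟩
    refine ⟨s (), sub_eq_zero.1 (eq_zero_of_forall_mem_varIdeal_pow fun n => ?_)⟩
    obtain ⟨s', hs', hss'⟩ := hs n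
    have := sub_mem (map_mem_varIdeal_pow φ (hss' ())) hs'
    simpa using this

end Endomorphism

section ContactEquiv

lemma span_singleton_eq_of_associated {R : Type*} [CommRing R] {a b : R} (h : Associated a b) :
    Ideal.span {a} = Ideal.span {b} := by
  obtain ⟨u, rfl⟩ := h
  exact (Ideal.span_singleton_mul_right_unit u.isUnit a).symm

variable {σ τ υ k : Type*} [Field k]

/-- Contact equivalence: `F` and `G` agree up to a change of coordinates and a unit factor.
The two power series may be written in differently indexed variables. -/
def ContactEquiv (F : MvPowerSeries σ k) (G : MvPowerSeries τ k) : Prop :=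
  ∃ Φ : MvPowerSeries σ k ≃ₐ[k] MvPowerSeries τ k, Associated (Φ F) G

namespace ContactEquiv

variable {F : MvPowerSeries σ k} {G : MvPowerSeries τ k} {H : MvPowerSeries υ k}

lemma of_algEquiv (Φ : MvPowerSeries σ k ≃ₐ[k] MvPowerSeries τ k) : ContactEquiv F (Φ F) :=
  ⟨Φ, .refl _⟩

lemma symm (h : ContactEquiv F G) : ContactEquiv G F := by
  obtain ⟨Φ, hΦ⟩ := h
  exact ⟨Φ.symm, by simpa using (hΦ.map Φ.symm).symm⟩

lemma trans (h₁ : ContactEquiv F G) (h₂ : ContactEquiv G H) : ContactEquiv F H := by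
  obtain ⟨Φ, hΦ⟩ := h₁
  obtain ⟨Ψ, hΨ⟩ := h₂
  exact ⟨Φ.trans Ψ, (hΦ.map Ψ).trans hΨ⟩

theorem nonempty_quotient_ringEquiv (h : ContactEquiv F G) :
    Nonempty ((MvPowerSeries σ k ⧸ Ideal.span {F}) ≃+* (MvPowerSeries τ k ⧸ Ideal.span {G})) := by
  obtain ⟨Φ, hΦ⟩ := h
  refine ⟨Ideal.quotientEquiv _ _ Φ.toRingEquiv ?_⟩
  rw [Ideal.map_span, Set.image_singleton]
  exact (span_singleton_eq_of_associated hΦ).symm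

end ContactEquiv

variable [Finite σ] [Finite τ]

lemma map_powIdeal_le (p : ℕ) [Fact p.Prime] [CharP k p]
    (φ : MvPowerSeries σ k →ₐ[k] MvPowerSeries τ k) (e : ℕ) :
    (powIdeal σ k (p ^ e)).map φ ≤ powIdeal τ k (p ^ e) := by
  have := Fintype.ofFinite τ
  have : CharP (MvPowerSeries τ k) p := charP_of_injective_ringHom C_injective p
  rw [powIdeal, Ideal.map_span, Ideal.span_le]
  rintro _ ⟨_, ⟨i, rfl⟩, rfl⟩
  have hX := map_X_mem_varIdeal φ i
  rw [← pow_one (varIdeal τ k)] at hX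
  obtain ⟨a, ha, -⟩ := exists_eq_sum_X_mul_of_mem_varIdeal_pow_succ (n := 0) hX
  rw [SetLike.mem_coe, map_pow, ha, sum_pow_char_pow]
  simp_rw [mul_pow]
  exact sum_mem fun j _ => Ideal.mul_mem_right _ _ (X_pow_mem_powIdeal j _)

theorem ContactEquiv.colength_eq (p : ℕ) [Fact p.Prime] [CharP k p] {F : MvPowerSeries σ k}
    {G : MvPowerSeries τ k} (h : ContactEquiv F G) (e : ℕ) :
    colength (p ^ e) F = colength (p ^ e) G := by
  obtain ⟨Φ, hΦ⟩ := h
  refine (Ideal.quotientEquivAlg _ _ Φ ?_).toLinearEquiv.finrank_eq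
  have hpow : (powIdeal σ k (p ^ e)).map (Φ : MvPowerSeries σ k →+* MvPowerSeries τ k) =
      powIdeal τ k (p ^ e) := by
    refine le_antisymm (map_powIdeal_le p Φ.toAlgHom e) fun f hf => ?_
    have := Ideal.mem_map_of_mem (Φ.symm : MvPowerSeries τ k →ₐ[k] MvPowerSeries σ k) hf
    have := Ideal.mem_map_of_mem (Φ : MvPowerSeries σ k →+* MvPowerSeries τ k)
      (map_powIdeal_le p _ e this)
    simpa using this
  rw [Ideal.span_union, Ideal.span_union, Ideal.map_sup, ← powIdeal, ← powIdeal, hpow,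
    Ideal.map_span, Set.image_singleton]
  exact congrArg (· ⊔ _) (span_singleton_eq_of_associated hΦ).symm

end ContactEquiv

section Splitting

variable {ι τ k : Type*} [Field k]

/-- The power series `Σ xᵢyᵢ + c(z)`, in the variables `xᵢ = X (inl (inl i))`,
`yᵢ = X (inl (inr i))` and `zₜ = X (inr t)`. -/
noncomputable def suspension (ι : Type*) [Fintype ι] (c : MvPowerSeries τ k) :
    MvPowerSeries ((ι ⊕ ι) ⊕ τ) k :=
  ∑ i, X (.inl (.inl i)) * X (.inl (.inr i)) + rename inr c

lemma killCompl_X_inl (j : ι) :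
    killCompl inr (X (.inl j) : MvPowerSeries (ι ⊕ τ) k) = (0 : MvPowerSeries τ k) :=
  killCompl_X_eq_zero (by simp)

lemma killCompl_suspension [Fintype ι] (c : MvPowerSeries τ k) :
    killCompl inr (suspension ι c) = c := by
  simp [suspension, killCompl_X_inl, killCompl_rename_app]

variable [Finite τ]

lemma exists_eq_sum_X_inl_mul_of_killCompl_eq_zero [Fintype ι] {D : MvPowerSeries (ι ⊕ τ) k}
    (hD : killCompl inr D = (0 : MvPowerSeries τ k)) {n : ℕ} (hDn : D ∈ varIdeal _ k ^ (n + 1)) :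
    ∃ a : ι → MvPowerSeries (ι ⊕ τ) k,
      D = ∑ j, X (.inl j) * a j ∧ ∀ j, a j ∈ varIdeal _ k ^ n := by
  classical
  obtain ⟨a, hDa, ha⟩ := exists_eq_sum_X_pow_mul_add_truncOn
    (Finset.univ.map (.inl : ι ↪ ι ⊕ τ)) 1 D
  have htrunc : truncOn (Finset.univ.map (.inl : ι ↪ ι ⊕ τ)) 1 D = 0 := by
    ext p
    rw [coeff_truncOn, map_zero]
    split_ifs with hp
    · have hp' : p = (p.comapDomain Sum.inr Sum.inr_injective.injOn).embDomain inr := by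
        ext (j | t)
        · have hj : p (.inl j) = 0 := by simpa using hp (.inl j) (by simp)
          rw [hj, Finsupp.embDomain_of_notMem_range _ _ _ (by simp)]
        · rw [← inr_apply, Finsupp.embDomain_apply_self]
          rfl
      rw [hp', ← coeff_killCompl, hD, map_zero]
    · rfl
  refine ⟨fun j => a (.inl j), ?_, fun j => mem_varIdeal_pow_iff.2 fun p hp => ?_⟩
  · simpa [htrunc] using hDa
  · obtain h | h := ha (.inl j) p
    · exact h
    · exact h.trans (mem_varIdeal_pow_iff.1 hDn _ (by simpa using hp))

lemma sub_rename_killCompl_mem [Finite ι] {E : MvPowerSeries (ι ⊕ τ) k} {c : MvPowerSeries τ k}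
    {n : ℕ} (h : E - rename inr c ∈ varIdeal _ k ^ n) :
    E - rename inr (killCompl inr E) ∈ varIdeal _ k ^ n := by
  have h' := map_mem_varIdeal_pow (rename (inr : τ ↪ ι ⊕ τ))
    (map_mem_varIdeal_pow (killCompl (inr : τ ↪ ι ⊕ τ)) h)
  rw [map_sub, killCompl_rename_app, map_sub] at h'
  simpa using sub_mem h h'

variable [Fintype ι]

lemma sum_mul_sub_sum_mul_mem {R : Type*} [CommRing R] {I : Ideal R} {ξ η : ι ⊕ ι → R}
    (h : ∀ j, ξ j - η j ∈ I) :
    ∑ i, ξ (.inl i) * ξ (.inr i) - ∑ i, η (.inl i) * η (.inr i) ∈ I := by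
  rw [← Finset.sum_sub_distrib]
  exact sum_mem fun i _ => I.mul_sub_mul_mem (h _) (h _)

/-- Writing the mixed part of `F - Σ ξᵢηᵢ` as `Σ xᵢaᵢ + yᵢbᵢ`, the correction is
`ξᵢ ↦ ξᵢ + bᵢ`, `ηᵢ ↦ ηᵢ + aᵢ`. -/
lemma exists_splitting_step (F : MvPowerSeries ((ι ⊕ ι) ⊕ τ) k) {n : ℕ}
    {ξ : ι ⊕ ι → MvPowerSeries ((ι ⊕ ι) ⊕ τ) k}
    (hξ : ∀ j, ξ j - X (.inl j) ∈ varIdeal _ k ^ 2)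
    (hE : F - ∑ i, ξ (.inl i) * ξ (.inr i)
      - rename inr (killCompl inr (F - ∑ i, ξ (.inl i) * ξ (.inr i))) ∈ varIdeal _ k ^ (n + 3)) :
    ∃ ξ' : ι ⊕ ι → MvPowerSeries ((ι ⊕ ι) ⊕ τ) k,
      (∀ j, ξ' j - ξ j ∈ varIdeal _ k ^ (n + 2)) ∧
      F - ∑ i, ξ' (.inl i) * ξ' (.inr i)
        - rename inr (killCompl inr (F - ∑ i, ξ' (.inl i) * ξ' (.inr i))) ∈
        varIdeal _ k ^ (n + 4) := by
  set E := F - ∑ i, ξ (.inl i) * ξ (.inr i) with hEdef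
  obtain ⟨a, hEa, ha⟩ := exists_eq_sum_X_inl_mul_of_killCompl_eq_zero (n := n + 2)
    (by rw [map_sub, killCompl_rename_app, sub_self]) hE
  refine ⟨fun j => ξ j + a j.swap, fun j => by simpa using ha j.swap,
    sub_rename_killCompl_mem (c := killCompl inr E) ?_⟩
  have hdiff : F - ∑ i, (ξ (.inl i) + a (.inr i)) * (ξ (.inr i) + a (.inl i))
      - rename inr (killCompl inr E) =
      - (∑ j, (ξ j - X (.inl j)) * a j + ∑ i, a (.inl i) * a (.inr i)) := by
    have hsum : ∑ i, (ξ (.inl i) + a (.inr i)) * (ξ (.inr i) + a (.inl i)) =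
        ∑ i, ξ (.inl i) * ξ (.inr i) + ∑ j, ξ j * a j + ∑ i, a (.inl i) * a (.inr i) := by
      rw [Fintype.sum_sum_type]
      simp only [← Finset.sum_add_distrib]
      exact Finset.sum_congr rfl fun i _ => by ring
    simp only [sub_mul, Finset.sum_sub_distrib]
    rw [hsum]
    linear_combination hEa - hEdef
  refine Eq.mpr (congrArg (· ∈ _) hdiff) ?_
  refine neg_mem (add_mem (sum_mem fun j _ => ?_) (sum_mem fun i _ => ?_))
  · rw [show n + 4 = 2 + (n + 2) by ring, pow_add]
    exact Ideal.mul_mem_mul (hξ j) (ha j)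
  · refine Ideal.pow_le_pow_right (show n + 4 ≤ n + 2 + (n + 2) by lia) ?_
    rw [pow_add]
    exact Ideal.mul_mem_mul (ha _) (ha _)

lemma exists_eq_sum_mul_add_rename {F : MvPowerSeries ((ι ⊕ ι) ⊕ τ) k} {c₀ : MvPowerSeries τ k}
    (hF : F - suspension ι c₀ ∈ varIdeal _ k ^ 3) :
    ∃ (ξ : ι ⊕ ι → MvPowerSeries ((ι ⊕ ι) ⊕ τ) k) (c : MvPowerSeries τ k),
      (∀ j, ξ j - X (.inl j) ∈ varIdeal _ k ^ 2) ∧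
      F = ∑ i, ξ (.inl i) * ξ (.inr i) + rename inr c := by
  obtain ⟨ξ, hξ⟩ := exists_forall_approximation
    (fun n (ξ : ι ⊕ ι → MvPowerSeries ((ι ⊕ ι) ⊕ τ) k) =>
      (∀ j, ξ j - X (.inl j) ∈ varIdeal _ k ^ 2) ∧
      F - ∑ i, ξ (.inl i) * ξ (.inr i)
        - rename inr (killCompl inr (F - ∑ i, ξ (.inl i) * ξ (.inr i))) ∈
        varIdeal _ k ^ (n + 3))
    ⟨fun j => X (.inl j), fun j => by simp, sub_rename_killCompl_mem (c := c₀) (by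
      rwa [sub_sub])⟩
    fun n ξ ⟨hξ, hE⟩ => by
      obtain ⟨ξ', hξξ', hE'⟩ := exists_splitting_step F hξ hE
      refine ⟨ξ', ⟨fun j => ?_, hE'⟩, fun j => Ideal.pow_le_pow_right (by lia) (hξξ' j)⟩
      simpa using add_mem (Ideal.pow_le_pow_right (by lia) (hξξ' j)) (hξ j)
  refine ⟨ξ, killCompl inr (F - ∑ i, ξ (.inl i) * ξ (.inr i)), fun j => ?_, ?_⟩
  · obtain ⟨ξ', ⟨hX, -⟩, hξξ'⟩ := hξ 2
    simpa using add_mem (hξξ' j) (hX j)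
  · refine eq_add_of_sub_eq' (sub_eq_zero.1 (eq_zero_of_forall_mem_varIdeal_pow fun n => ?_))
    obtain ⟨ξ', ⟨-, hE'⟩, hξξ'⟩ := hξ n
    refine sub_rename_killCompl_mem (c := killCompl inr (F - ∑ i, ξ' (.inl i) * ξ' (.inr i))) ?_
    convert sub_mem (Ideal.pow_le_pow_right (by lia) hE') (sum_mul_sub_sum_mul_mem hξξ') using 1
    ring

/-- The splitting lemma (generalized Morse lemma). -/
theorem exists_contactEquiv_suspension {F : MvPowerSeries ((ι ⊕ ι) ⊕ τ) k}
    {c₀ : MvPowerSeries τ k} (hF : F - suspension ι c₀ ∈ varIdeal _ k ^ 3) :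
    ∃ c : MvPowerSeries τ k, c - c₀ ∈ varIdeal τ k ^ 3 ∧ ContactEquiv F (suspension ι c) := by
  obtain ⟨ξ, c, hξ, hFξ⟩ := exists_eq_sum_mul_add_rename hF
  refine ⟨c, ?_, ?_⟩
  · have hkill (j : ι ⊕ ι) : killCompl inr (ξ j) ∈ varIdeal τ k ^ 2 := by
      simpa [killCompl_X_inl] using map_mem_varIdeal_pow (killCompl inr) (hξ j)
    have hF' := map_mem_varIdeal_pow (killCompl inr) hF
    rw [map_sub, killCompl_suspension, hFξ, map_add, killCompl_rename_app, map_sum] at hF'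
    have hsum : ∑ i, killCompl inr (ξ (.inl i) * ξ (.inr i)) ∈ varIdeal τ k ^ 3 := by
      refine sum_mem fun i _ => Ideal.pow_le_pow_right (show 3 ≤ 2 + 2 by simp) ?_
      rw [map_mul, pow_add]
      exact Ideal.mul_mem_mul (hkill _) (hkill _)
    convert sub_mem hF' hsum using 1
    ring
  · have hmem : ∀ j, Sum.elim ξ (fun t => X (.inr t)) j - X j ∈ varIdeal _ k ^ 2 := by
      rintro (j | t) <;> simp [hξ]
    obtain ⟨φ, hφ⟩ := exists_algHom_X_eq (Sum.elim ξ fun t => X (.inr t)) fun j => by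
      simpa using add_mem (Ideal.pow_le_self two_ne_zero (hmem j)) (X_mem_varIdeal j)
    have hrename : φ.comp (rename inr) = rename inr := algHom_ext fun t => by simp [hφ]
    have hφc : φ (suspension ι c) = F := by
      rw [suspension, map_add, ← AlgHom.comp_apply φ, hrename, hFξ]
      simp [hφ]
    rw [← hφc]
    exact (ContactEquiv.of_algEquiv (AlgEquiv.ofBijective φ
      (bijective_of_map_X_sub_X_mem φ fun j => hφ j ▸ hmem j))).symm

end Splitting

section Suspension

variable {ι κ τ υ k : Type*} [Field k]

lemma contactEquiv_rename (e : τ ≃ υ) (c : MvPowerSeries τ k) : ContactEquiv c (rename e c) :=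
  .of_algEquiv (renameEquiv k e)

lemma contactEquiv_suspension_suspension [Fintype ι] [Fintype κ] (c : MvPowerSeries τ k) :
    ContactEquiv (suspension ι (suspension κ c)) (suspension (ι ⊕ κ) c) := by
  let e : (ι ⊕ ι) ⊕ ((κ ⊕ κ) ⊕ τ) ≃ ((ι ⊕ κ) ⊕ (ι ⊕ κ)) ⊕ τ :=
    (Equiv.sumAssoc _ _ _).symm.trans ((Equiv.sumSumSumComm _ _ _ _).sumCongr (Equiv.refl τ))
  have he : rename e (suspension ι (suspension κ c)) = suspension (ι ⊕ κ) c := by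
    simp only [suspension, e, Equiv.coe_trans, Equiv.sumCongr_apply, Equiv.coe_refl, map_add,
      map_sum, map_mul, rename_X, inr_apply, rename_rename, Function.comp_apply,
      Fintype.sum_sum_type, add_assoc]
    rfl
  exact he ▸ contactEquiv_rename e _

lemma contactEquiv_suspension_congr [Fintype ι] [Fintype κ] (e : ι ≃ κ) (c : MvPowerSeries τ k) :
    ContactEquiv (suspension ι c) (suspension κ c) := by
  have he : rename ((e.sumCongr e).sumCongr (.refl τ)) (suspension ι c) =
      suspension κ c := by
    rw [suspension, suspension, ← e.sum_comp]
    simp only [map_add, map_sum, map_mul, rename_X, Equiv.sumCongr_apply, Equiv.coe_refl,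
      Sum.map_inl, Sum.map_inr, rename_rename]
    rfl
  exact he ▸ contactEquiv_rename _ _

variable [Finite τ] [Finite υ]

lemma exists_algHom_extend [Finite ι] [Finite κ] (ξ : ι → MvPowerSeries (κ ⊕ υ) k)
    (hξ : ∀ i, ξ i ∈ varIdeal _ k)
    (φ : MvPowerSeries τ k →ₐ[k] MvPowerSeries υ k) :
    ∃ ψ : MvPowerSeries (ι ⊕ τ) k →ₐ[k] MvPowerSeries (κ ⊕ υ) k,
      (∀ i, ψ (X (.inl i)) = ξ i) ∧ ∀ c, ψ (rename inr c) = rename inr (φ c) := by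
  obtain ⟨ψ, hψ⟩ := exists_algHom_X_eq (Sum.elim ξ fun t => rename inr (φ (X t))) (by
    rintro (i | t)
    · exact hξ i
    · exact map_X_mem_varIdeal ((rename (inr : υ ↪ κ ⊕ υ)).comp φ) t)
  refine ⟨ψ, fun i => hψ (.inl i), fun c => ?_⟩
  have : ψ.comp (rename inr) = (rename inr).comp φ := algHom_ext fun t => by simp [hψ]
  exact DFunLike.congr_fun this c

lemma algHom_ext_sum [Finite ι] {φ ψ : MvPowerSeries (ι ⊕ τ) k →ₐ[k] MvPowerSeries υ k}
    (hinl : ∀ i, φ (X (.inl i)) = ψ (X (.inl i)))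
    (hinr : ∀ c : MvPowerSeries τ k, φ (rename inr c) = ψ (rename inr c)) : φ = ψ := by
  refine algHom_ext ?_
  rintro (i | t)
  · exact hinl i
  · simpa using hinr (X t)

variable [Fintype ι] [Fintype κ]

lemma contactEquiv_suspension_of_algEquiv (Φ : MvPowerSeries τ k ≃ₐ[k] MvPowerSeries υ k)
    (c : MvPowerSeries τ k) : ContactEquiv (suspension ι c) (suspension ι (Φ c)) := by
  obtain ⟨ψ, hψX, hψ⟩ := exists_algHom_extend (fun i : ι ⊕ ι => X (.inl i))
    (fun i => X_mem_varIdeal _) (Φ : MvPowerSeries τ k →ₐ[k] MvPowerSeries υ k)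
  obtain ⟨χ, hχX, hχ⟩ := exists_algHom_extend (fun i : ι ⊕ ι => X (.inl i))
    (fun i => X_mem_varIdeal _) (Φ.symm : MvPowerSeries υ k →ₐ[k] MvPowerSeries τ k)
  let Ψ := AlgEquiv.ofAlgHom ψ χ
    (algHom_ext_sum (by simp [hψX, hχX]) (by simp [hψ, hχ]))
    (algHom_ext_sum (by simp [hψX, hχX]) (by simp [hψ, hχ]))
  have hΨ : Ψ (suspension ι c) = suspension ι (Φ c) := by
    simp [Ψ, suspension, hψX, hψ]
  exact hΨ ▸ .of_algEquiv Ψ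

/-- The unit `w` is absorbed by the substitution `xᵢ ↦ w xᵢ`. -/
lemma contactEquiv_suspension_mul_unit (c : MvPowerSeries τ k) (w : (MvPowerSeries τ k)ˣ) :
    ContactEquiv (suspension ι (c * (w : MvPowerSeries τ k))) (suspension ι c) := by
  have hscale (v : MvPowerSeries τ k) := exists_algHom_extend (κ := ι ⊕ ι) (υ := τ)
    (Sum.elim (fun i => X (.inl (.inl i)) * rename inr v) fun i => X (.inl (.inr i)))
    (by rintro (i | i) <;> simp [Ideal.mul_mem_right, X_mem_varIdeal]) (AlgHom.id k _)
  obtain ⟨ψ, hψX, hψ⟩ := hscale w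
  obtain ⟨χ, hχX, hχ⟩ := hscale ↑w⁻¹
  simp only [AlgHom.coe_id, id_eq] at hψ hχ
  have hw {v v' : MvPowerSeries τ k} (h : v * v' = 1) :
      rename (inr : τ ↪ (ι ⊕ ι) ⊕ τ) v * rename inr v' = 1 := by
    rw [← map_mul, h, map_one]
  let Ψ := AlgEquiv.ofAlgHom ψ χ
    (algHom_ext_sum (by rintro (i | i) <;> simp [hψX, hχX, hψ, mul_assoc, hw w.mul_inv])
      (by simp [hψ, hχ]))
    (algHom_ext_sum (by rintro (i | i) <;> simp [hψX, hχX, hχ, mul_assoc, hw w.inv_mul])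
      (by simp [hψ, hχ]))
  have hΨ : Ψ (suspension ι (c * (w : MvPowerSeries τ k))) = suspension ι c * rename inr ↑w := by
    simp only [suspension, map_add, map_sum, map_mul, add_mul, Finset.sum_mul, Ψ,
      AlgEquiv.ofAlgHom_apply, hψX, hψ, Sum.elim_inl, Sum.elim_inr, mul_right_comm]
  exact ⟨Ψ, hΨ ▸ associated_mul_unit_left _ _ (w.isUnit.map (rename inr))⟩

theorem ContactEquiv.suspension {c : MvPowerSeries τ k} {d : MvPowerSeries υ k}
    (h : ContactEquiv c d) : ContactEquiv (suspension ι c) (suspension ι d) := by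
  obtain ⟨Φ, u, rfl⟩ := h
  exact (contactEquiv_suspension_of_algEquiv Φ c).trans (contactEquiv_suspension_mul_unit _ u).symm

end Suspension

section QuadraticForm

variable {k V : Type*} [Field k] [AddCommGroup V] [Module k V]

/-- The hypotheses make `v ↦ v - α v • e - β v • f` a projection onto `ker α ⊓ ker β`, along the
plane spanned by `e` and `f`. -/
lemma exists_linearEquiv_of_dual_pair {n : ℕ} [FiniteDimensional k V]
    (hn : Module.finrank k V = n + 2)
    {α β : Module.Dual k V} {e f : V} (hαe : α e = 1) (hαf : α f = 0) (hβe : β e = 0)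
    (hβf : β f = 1) :
    ∃ (L : V ≃ₗ[k] ((Unit ⊕ Unit) ⊕ Fin n → k)) (g : (Fin n → k) →ₗ[k] V),
      ∀ v, L v (.inl (.inl ())) = α v ∧ L v (.inl (.inr ())) = β v ∧
        g (fun j => L v (.inr j)) = v - α v • e - β v • f := by
  have hker : Module.finrank k (LinearMap.ker (α.prod β)) = n := by
    have hsurj : Function.Surjective (α.prod β) := fun x => ⟨x.1 • e + x.2 • f, by
      ext <;> simp [hαe, hαf, hβe, hβf]⟩
    have := LinearMap.finrank_range_add_finrank_ker (α.prod β)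
    rw [LinearMap.range_eq_top.2 hsurj, finrank_top, Module.finrank_prod,
      Module.finrank_self] at this
    lia
  let b := Module.finBasisOfFinrankEq k _ hker
  let π : V →ₗ[k] LinearMap.ker (α.prod β) :=
    (LinearMap.id - α.smulRight e - β.smulRight f).codRestrict _ fun v => by
      ext <;> simp [hαe, hαf, hβe, hβf]
  have hπ (v : V) : (π v : V) = v - α v • e - β v • f := rfl
  let L : V →ₗ[k] ((Unit ⊕ Unit) ⊕ Fin n → k) := LinearMap.pi
    (Sum.elim (Sum.elim (fun _ => α) fun _ => β) fun j => (b.coord j).comp π)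
  have hg (v : V) : b.equivFun.symm (fun j => L v (.inr j)) = π v := b.equivFun.symm_apply_apply _
  have hL : Function.Injective L := by
    refine (injective_iff_map_eq_zero L).2 fun v hv => ?_
    have hα : α v = 0 := congrFun hv (.inl (.inl ()))
    have hβ : β v = 0 := congrFun hv (.inl (.inr ()))
    have hπ' := hπ v
    rw [← hg, hv, hα, hβ] at hπ'
    simpa using hπ'.symm
  have hcard : Module.finrank k V = Module.finrank k ((Unit ⊕ Unit) ⊕ Fin n → k) := by
    simp [hn, add_comm]
  refine ⟨L.linearEquivOfInjective hL hcard,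
    (Submodule.subtype _).comp b.equivFun.symm.toLinearMap, fun v => ⟨rfl, rfl, ?_⟩⟩
  exact (congrArg Subtype.val (hg v)).trans (hπ v)

lemma exists_dual_pair_smul_eq [FiniteDimensional k V] (hV : 2 ≤ Module.finrank k V)
    (ℓ : Module.Dual k V) :
    ∃ (ε : k) (α β : Module.Dual k V) (e f : V), ε • α = ℓ ∧
      α e = 1 ∧ α f = 0 ∧ β e = 0 ∧ β f = 1 := by
  obtain ⟨ε, α, e, hℓ, hαe⟩ : ∃ (ε : k) (α : Module.Dual k V) (e : V), ε • α = ℓ ∧ α e = 1 := by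
    by_cases hℓ : ℓ = 0
    · have := Module.nontrivial_of_finrank_pos (R := k) (M := V) (by lia)
      obtain ⟨e, he⟩ := exists_ne (0 : V)
      obtain ⟨α, hα⟩ := Module.Projective.exists_dual_ne_zero k he
      exact ⟨0, (α e)⁻¹ • α, e, by simp [hℓ], inv_mul_cancel₀ hα⟩
    · obtain ⟨e, he⟩ := DFunLike.ne_iff.1 hℓ
      exact ⟨1, ℓ, (ℓ e)⁻¹ • e, one_smul _ _, by simpa using inv_mul_cancel₀ he⟩
  obtain ⟨f, hαf, hf⟩ : ∃ f ∈ LinearMap.ker α, f ≠ 0 := by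
    refine Submodule.exists_mem_ne_zero_of_ne_bot fun hbot => ?_
    have := LinearMap.finrank_le_finrank_of_injective (LinearMap.ker_eq_bot.1 hbot)
    rw [Module.finrank_self] at this
    lia
  obtain ⟨γ, hγ⟩ := Module.Projective.exists_dual_ne_zero k hf
  refine ⟨ε, α, (γ f)⁻¹ • (γ - γ e • α), e, f, hℓ, hαe, hαf, ?_, ?_⟩
  · simp [hαe]
  · simp [LinearMap.mem_ker.1 hαf, inv_mul_cancel₀ hγ]

variable [CharP k 2]

lemma polar_self_eq_zero (Q : QuadraticForm k V) (v : V) : polar Q v v = 0 := by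
  rw [Q.polar_self, two_nsmul, CharTwo.add_self_eq_zero]

variable [IsAlgClosed k]

lemma exists_hyperbolic_pair (Q : QuadraticForm k V) {u v : V} (huv : polar Q u v ≠ 0) :
    ∃ e f : V, Q e = 0 ∧ Q f = 0 ∧ polar Q e f = 1 := by
  obtain ⟨x, hx⟩ : ∃ x : k, Q u + x * x * Q v + x * polar Q u v = 0 := by
    obtain ⟨x, hx⟩ := IsAlgClosed.exists_root
      (.C (Q v) * .X ^ 2 + .C (polar Q u v) * .X + .C (Q u) : Polynomial k) (fun hdeg => by
        have := congrArg (Polynomial.coeff · 1) (Polynomial.eq_C_of_degree_eq_zero hdeg)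
        simp [Polynomial.coeff_X, Polynomial.coeff_C, huv] at this)
    refine ⟨x, ?_⟩
    simp only [Polynomial.IsRoot.def, Polynomial.eval_add, Polynomial.eval_mul,
      Polynomial.eval_pow, Polynomial.eval_C, Polynomial.eval_X] at hx
    linear_combination hx
  obtain ⟨e, g, he, heg⟩ : ∃ e g, Q e = 0 ∧ polar Q e g = 1 := by
    refine ⟨u + x • v, (polar Q u v)⁻¹ • v, ?_, ?_⟩
    · rw [QuadraticMap.map_add Q, Q.map_smul, Q.polar_smul_right, smul_eq_mul, smul_eq_mul, hx]
    · rw [Q.polar_add_left, Q.polar_smul_left, Q.polar_smul_right, Q.polar_smul_right,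
        polar_self_eq_zero, smul_zero, smul_zero, add_zero, smul_eq_mul, inv_mul_cancel₀ huv]
  refine ⟨e, g + Q g • e, he, ?_, ?_⟩
  · rw [QuadraticMap.map_add Q, Q.map_smul, he, Q.polar_smul_right, QuadraticMap.polar_comm, heg,
      smul_zero, add_zero, smul_eq_mul, mul_one, CharTwo.add_self_eq_zero]
  · rw [Q.polar_add_right, Q.polar_smul_right, heg, polar_self_eq_zero, smul_zero, add_zero]

lemma exists_linearEquiv_of_polar_ne_zero {n : ℕ} [FiniteDimensional k V]
    (hn : Module.finrank k V = n + 2) (Q : QuadraticForm k V) {u v : V} (huv : polar Q u v ≠ 0) :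
    ∃ (L : V ≃ₗ[k] ((Unit ⊕ Unit) ⊕ Fin n → k)) (Q' : QuadraticForm k (Fin n → k)),
      ∀ v, Q v = L v (.inl (.inl ())) * L v (.inl (.inr ())) + Q' fun j => L v (.inr j) := by
  obtain ⟨e, f, he, hf, hef⟩ := exists_hyperbolic_pair Q huv
  have hfe : polar Q f e = 1 := QuadraticMap.polar_comm Q e f ▸ hef
  obtain ⟨L, g, hL⟩ := exists_linearEquiv_of_dual_pair hn (α := Q.polarBilin f)
    (β := Q.polarBilin e) hfe (polar_self_eq_zero Q f) (polar_self_eq_zero Q e) hef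
  refine ⟨L, Q.comp g, fun v => ?_⟩
  obtain ⟨hα, hβ, hg⟩ := hL v
  rw [hα, hβ, QuadraticMap.comp_apply, hg, QuadraticMap.polarBilin_apply_apply,
    QuadraticMap.polarBilin_apply_apply]
  simp only [sub_eq_add_neg, ← neg_smul, QuadraticMap.map_add Q, Q.map_smul,
    Q.polar_add_left, Q.polar_smul_left, Q.polar_smul_right, he, hf, hef, smul_eq_mul,
    QuadraticMap.polar_comm Q v]
  ring

lemma exists_dual_sq_eq (Q : QuadraticForm k V) (hQ : ∀ u v, polar Q u v = 0) :
    ∃ ℓ : Module.Dual k V, ∀ v, ℓ v ^ 2 = Q v := by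
  let sqrt := (frobeniusEquiv k 2).symm
  refine ⟨{ toFun := fun v => sqrt (Q v), map_add' := fun u v => ?_, map_smul' := fun x v => ?_ },
    fun v => frobeniusEquiv_symm_pow_p k 2 (Q v)⟩
  · rw [QuadraticMap.map_add Q, hQ, add_zero, map_add]
  · rw [Q.map_smul, smul_eq_mul, map_mul, ← pow_two, frobeniusEquiv_symm_pow, RingHom.id_apply,
      smul_eq_mul]

end QuadraticForm

section QuadraticPart

variable {k σ τ : Type*} [Field k]

/-- `Q` is the degree-two part of the power series `F` modulo `𝔪 ^ 3`. Since `Q` is a function on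
`σ → k`, it is related to `F` through a polynomial `p` with the same values. -/
def HasQuadraticPart (F : MvPowerSeries σ k) (Q : QuadraticForm k (σ → k)) : Prop :=
  ∃ p : MvPolynomial σ k, (∀ v, MvPolynomial.eval v p = Q v) ∧
    F - MvPolynomial.aeval X p ∈ varIdeal σ k ^ 3

lemma exists_eval_eq_dual [Finite σ] (ℓ : Module.Dual k (σ → k)) :
    ∃ p : MvPolynomial σ k, (∀ v, MvPolynomial.eval v p = ℓ v) ∧
      MvPolynomial.aeval X p ∈ varIdeal σ k := by
  classical
  have := Fintype.ofFinite σ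
  refine ⟨∑ i, .C (ℓ (Pi.single i 1)) * .X i, fun v => ?_, ?_⟩
  · conv_rhs => rw [pi_eq_sum_univ' v]
    simp [mul_comm]
  · simp only [map_sum, map_mul, MvPolynomial.aeval_X]
    exact sum_mem fun i _ => Ideal.mul_mem_left _ _ (X_mem_varIdeal i)

lemma exists_eval_eq_quadraticForm [Finite σ] (Q : QuadraticForm k (σ → k)) :
    ∃ p : MvPolynomial σ k, (∀ v, MvPolynomial.eval v p = Q v) ∧
      MvPolynomial.aeval X p ∈ varIdeal σ k ^ 2 := by
  classical
  have := Fintype.ofFinite σ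
  obtain ⟨B, rfl⟩ := LinearMap.BilinMap.toQuadraticMap_surjective Q
  refine ⟨∑ i, ∑ j, .C (B (Pi.single i 1) (Pi.single j 1)) * (.X i * .X j), fun v => ?_, ?_⟩
  · rw [LinearMap.BilinMap.toQuadraticMap_apply]
    conv_rhs => rw [pi_eq_sum_univ' v]
    simp only [map_sum, map_smul, LinearMap.sum_apply, LinearMap.smul_apply, smul_eq_mul,
      map_mul, MvPolynomial.eval_C, MvPolynomial.eval_X]
    rw [Finset.sum_comm]
    simp only [Finset.mul_sum]
    exact Finset.sum_congr rfl fun i _ => Finset.sum_congr rfl fun j _ => by ring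
  · simp only [map_sum, map_mul, MvPolynomial.aeval_X, pow_two]
    exact sum_mem fun i _ => sum_mem fun j _ => Ideal.mul_mem_left _ _
      (Ideal.mul_mem_mul (X_mem_varIdeal i) (X_mem_varIdeal j))

lemma exists_hasQuadraticPart [Finite σ] {F : MvPowerSeries σ k} (hF : F ∈ varIdeal σ k ^ 2) :
    ∃ Q, HasQuadraticPart F Q := by
  have := Fintype.ofFinite σ
  obtain ⟨a, rfl, ha⟩ := exists_eq_sum_X_mul_of_mem_varIdeal_pow_succ hF
  choose b hab _ using fun i => exists_eq_sum_X_mul_of_mem_varIdeal_pow_succ (ha i)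
  let Q : QuadraticForm k (σ → k) := ∑ i, ∑ j, constantCoeff (b i j) • .proj i j
  refine ⟨Q, ∑ i, ∑ j, .C (constantCoeff (b i j)) * (.X i * .X j), fun v => ?_, ?_⟩
  · simp [Q]
  · have hterm (i j : σ) : X i * X j * (b i j - C (constantCoeff (b i j))) ∈ varIdeal σ k ^ 3 := by
      rw [pow_succ, pow_two]
      exact Ideal.mul_mem_mul (Ideal.mul_mem_mul (X_mem_varIdeal i) (X_mem_varIdeal j))
        (sub_C_constantCoeff_mem_varIdeal _)
    convert sum_mem fun i (_ : i ∈ Finset.univ) => sum_mem fun j (_ : j ∈ Finset.univ) => hterm i j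
      using 1
    simp only [map_sum, map_mul, MvPolynomial.aeval_X, ← Finset.sum_sub_distrib]
    refine Finset.sum_congr rfl fun i _ => ?_
    rw [hab i, Finset.mul_sum, ← Finset.sum_sub_distrib]
    refine Finset.sum_congr rfl fun j _ => ?_
    rw [MvPolynomial.aeval_C, MvPowerSeries.algebraMap_apply, Algebra.algebraMap_self,
      RingHom.id_apply]
    ring

lemma exists_algHom_of_linearMap [Infinite k] [Finite σ] [Finite τ]
    (L : (τ → k) →ₗ[k] (σ → k)) :
    ∃ φ : MvPowerSeries σ k →ₐ[k] MvPowerSeries τ k, ∀ p p',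
      (∀ v, MvPolynomial.eval v p' = MvPolynomial.eval (L v) p) →
        φ (MvPolynomial.aeval X p) = MvPolynomial.aeval X p' := by
  choose l hl hmem using fun i : σ => exists_eval_eq_dual (LinearMap.proj i ∘ₗ L)
  obtain ⟨φ, hφ⟩ := exists_algHom_X_eq (fun i => MvPolynomial.aeval X (l i)) hmem
  refine ⟨φ, fun p p' h => ?_⟩
  obtain rfl : p' = MvPolynomial.bind₁ l p := MvPolynomial.funext fun v => by
    rw [h, ← MvPolynomial.coe_aeval_eq_eval, ← MvPolynomial.coe_aeval_eq_eval, RingHom.coe_coe,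
      RingHom.coe_coe, MvPolynomial.aeval_bind₁]
    simp [hl]
  rw [MvPolynomial.comp_aeval_apply, MvPolynomial.aeval_bind₁]
  simp only [hφ]

lemma exists_algEquiv_of_linearEquiv [Infinite k] [Finite σ] [Finite τ]
    (L : (τ → k) ≃ₗ[k] (σ → k)) :
    ∃ Φ : MvPowerSeries σ k ≃ₐ[k] MvPowerSeries τ k, ∀ p p',
      (∀ v, MvPolynomial.eval v p' = MvPolynomial.eval (L v) p) →
        Φ (MvPolynomial.aeval X p) = MvPolynomial.aeval X p' := by
  obtain ⟨φ, hφ⟩ := exists_algHom_of_linearMap L.toLinearMap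
  obtain ⟨ψ, hψ⟩ := exists_algHom_of_linearMap L.symm.toLinearMap
  have hφψ : φ.comp ψ = AlgHom.id k _ := algHom_ext fun i => by
    obtain ⟨p, hp, -⟩ := exists_eval_eq_dual (LinearMap.proj i ∘ₗ L.symm.toLinearMap)
    have h := hψ (.X i) p fun v => by simp [hp]
    have h' := hφ p (.X i) fun v => by simp [hp]
    simp only [MvPolynomial.aeval_X] at h h'
    rw [AlgHom.comp_apply, h, h', AlgHom.id_apply]
  have hψφ : ψ.comp φ = AlgHom.id k _ := algHom_ext fun i => by
    obtain ⟨p, hp, -⟩ := exists_eval_eq_dual (LinearMap.proj i ∘ₗ L.toLinearMap)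
    have h := hφ (.X i) p fun v => by simp [hp]
    have h' := hψ p (.X i) fun v => by simp [hp]
    simp only [MvPolynomial.aeval_X] at h h'
    rw [AlgHom.comp_apply, h, h', AlgHom.id_apply]
  exact ⟨AlgEquiv.ofAlgHom φ ψ hφψ hψφ, hφ⟩

namespace HasQuadraticPart

variable {F : MvPowerSeries σ k} {Q : QuadraticForm k (σ → k)}

lemma mem_varIdeal_sq [Finite σ] [Infinite k] (h : HasQuadraticPart F Q) :
    F ∈ varIdeal σ k ^ 2 := by
  obtain ⟨p, hp, hF⟩ := h
  obtain ⟨p', hp', hmem⟩ := exists_eval_eq_quadraticForm Q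
  obtain rfl : p = p' := MvPolynomial.funext fun v => by rw [hp, hp']
  simpa using add_mem (Ideal.pow_le_pow_right (by lia) hF) hmem

lemma mem_varIdeal_pow_three [Infinite k] (h : HasQuadraticPart F 0) :
    F ∈ varIdeal σ k ^ 3 := by
  obtain ⟨p, hp, hF⟩ := h
  obtain rfl : p = 0 := MvPolynomial.funext fun v => by simp [hp]
  simpa using hF

lemma add_smul_mul (h : HasQuadraticPart F Q) {α β : Module.Dual k (σ → k)}
    {p q : MvPolynomial σ k} (hp : ∀ v, MvPolynomial.eval v p = α v)
    (hq : ∀ v, MvPolynomial.eval v q = β v) (t : k) :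
    HasQuadraticPart (F + t • MvPolynomial.aeval X (p * q))
      (Q + t • QuadraticMap.linMulLin α β) := by
  obtain ⟨r, hr, hF⟩ := h
  refine ⟨r + t • (p * q), fun v => ?_, ?_⟩
  · simp [hr, hp, hq, MvPolynomial.smul_eval]
  · rw [map_add, map_smul]
    simpa using hF

lemma exists_contactEquiv [Infinite k] [Finite σ] [Finite τ] (h : HasQuadraticPart F Q)
    (L : (σ → k) ≃ₗ[k] (τ → k)) :
    ∃ F' : MvPowerSeries τ k, ContactEquiv F F' ∧
      HasQuadraticPart F' (Q.comp L.symm.toLinearMap) := by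
  obtain ⟨p, hp, hF⟩ := h
  obtain ⟨Φ, hΦ⟩ := exists_algEquiv_of_linearEquiv L.symm
  obtain ⟨p', hp', -⟩ := exists_eval_eq_quadraticForm (Q.comp L.symm.toLinearMap)
  refine ⟨Φ F, .of_algEquiv Φ, p', hp', ?_⟩
  have hpp' := hΦ p p' fun v => by simp [hp, hp']
  simpa [hpp'] using map_mem_varIdeal_pow Φ.toAlgHom hF

lemma exists_contactEquiv_suspension [Infinite k] [Finite σ] [Finite τ] (h : HasQuadraticPart F Q)
    (L : (σ → k) ≃ₗ[k] ((Unit ⊕ Unit) ⊕ τ → k)) (Q' : QuadraticForm k (τ → k))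
    (hL : ∀ v, Q v = L v (.inl (.inl ())) * L v (.inl (.inr ())) + Q' fun j => L v (.inr j)) :
    ∃ c : MvPowerSeries τ k, HasQuadraticPart c Q' ∧ ContactEquiv F (suspension Unit c) := by
  obtain ⟨F', hFF', p, hp, hF'⟩ := h.exists_contactEquiv L
  obtain ⟨p', hp', -⟩ := exists_eval_eq_quadraticForm Q'
  have hpp' : p = .X (.inl (.inl ())) * .X (.inl (.inr ())) + MvPolynomial.rename Sum.inr p' :=
    MvPolynomial.funext fun v => by
      simp [hp, hL, MvPolynomial.eval_rename, hp', Function.comp_def]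
  have hsusp : suspension Unit (MvPolynomial.aeval X p' : MvPowerSeries τ k) =
      MvPolynomial.aeval X p := by
    rw [suspension, MvPolynomial.comp_aeval_apply]
    simp [hpp', MvPolynomial.aeval_rename, Function.comp_def]
  obtain ⟨c, hc, hFc⟩ := HilbertKunz.exists_contactEquiv_suspension (hsusp.symm ▸ hF')
  exact ⟨c, ⟨p', hp', hc⟩, hFF'.trans hFc⟩

end HasQuadraticPart

end QuadraticPart

section Degeneration

variable {k ι τ : Type*} [Field k]

lemma contactEquiv_suspension_of_isEmpty [Fintype ι] [IsEmpty ι] (c : MvPowerSeries τ k) :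
    ContactEquiv c (suspension ι c) := by
  have he : rename (Equiv.emptySum (ι ⊕ ι) τ).symm c = suspension ι c := by
    simp only [suspension, Finset.univ_eq_empty, Finset.sum_empty, zero_add]
    rfl
  exact he ▸ contactEquiv_rename _ c

lemma suspension_add [Fintype ι] (c c' : MvPowerSeries τ k) :
    suspension ι (c + c') = suspension ι c + rename inr c' := by
  rw [suspension, suspension, map_add, add_assoc]

variable [Finite τ] {c : MvPowerSeries τ k} {Q : QuadraticForm k (τ → k)} {n : ℕ}

lemma contactEquiv_suspension_fin_succ {c' : MvPowerSeries (Fin n) k}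
    (h : ContactEquiv c (suspension Unit c')) (r : ℕ) :
    ContactEquiv (suspension (Fin r) c) (suspension (Fin (r + 1)) c') :=
  (h.suspension.trans (contactEquiv_suspension_suspension c')).trans
    (contactEquiv_suspension_congr (Fintype.equivOfCardEq (by simp)) c')

variable [CharP k 2] [IsAlgClosed k]

lemma exists_contactEquiv_suspension_of_polar_ne_zero (hn : Nat.card τ = n + 2)
    (hc : HasQuadraticPart c Q) {u v : τ → k} (huv : polar Q u v ≠ 0) :
    ∃ c' ∈ varIdeal (Fin n) k ^ 2, ContactEquiv c (suspension Unit c') := by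
  have := Fintype.ofFinite τ
  obtain ⟨L, Q', hL⟩ := exists_linearEquiv_of_polar_ne_zero
    (by rw [Module.finrank_pi, ← hn, Nat.card_eq_fintype_card]) Q huv
  obtain ⟨c', hc', hcc'⟩ := hc.exists_contactEquiv_suspension L Q' hL
  exact ⟨c', hc'.mem_varIdeal_sq, hcc'⟩

/-- If the quadratic part of `c` is the square of `ε • α`, then adding a multiple of `α * β`
makes it the product of the independent linear forms `α` and `ε ^ 2 • α + t • β`. -/
lemma exists_add_smul_contactEquiv_suspension (hn : Nat.card τ = n + 2)
    (hc : HasQuadraticPart c Q) (hQ : ∀ u v, polar Q u v = 0) :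
    ∃ G : MvPowerSeries τ k, ∀ t : k, t ≠ 0 → ∃ c' ∈ varIdeal (Fin n) k ^ 3,
      ContactEquiv (c + t • G) (suspension Unit c') := by
  have := Fintype.ofFinite τ
  have hfin : Module.finrank k (τ → k) = n + 2 := by
    rw [Module.finrank_pi, ← hn, Nat.card_eq_fintype_card]
  obtain ⟨ℓ, hℓ⟩ := exists_dual_sq_eq Q hQ
  obtain ⟨ε, α, β, e, f, rfl, hαe, hαf, hβe, hβf⟩ := exists_dual_pair_smul_eq (by lia) ℓ
  obtain ⟨p, hp, -⟩ := exists_eval_eq_dual α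
  obtain ⟨p', hp', -⟩ := exists_eval_eq_dual β
  refine ⟨MvPolynomial.aeval X (p * p'), fun t ht => ?_⟩
  obtain ⟨L, _, hL⟩ := exists_linearEquiv_of_dual_pair hfin (α := α)
    (β := ε ^ 2 • α + t • β) (e := e - (ε ^ 2 * t⁻¹) • f) (f := t⁻¹ • f)
    (by simp [hαe, hαf]) (by simp [hαf])
    (by simp [hαe, hαf, hβe, hβf, mul_comm t, ht]) (by simp [hαf, hβf, ht])
  obtain ⟨c', hc', hcc'⟩ := (hc.add_smul_mul hp hp' t).exists_contactEquiv_suspension L 0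
    fun v => by
      simp only [add_apply, smul_apply, zero_apply, LinearMap.add_apply, LinearMap.smul_apply,
        smul_eq_mul, QuadraticMap.linMulLin_apply, ← hℓ, hL v, add_zero]
      ring
  exact ⟨c', hc'.mem_varIdeal_pow_three, hcc'⟩

lemma exists_colength_suspension_le (hn : Nat.card τ = n + 2)
    (hc : HasQuadraticPart c Q) (hQ : ∀ u v, polar Q u v = 0) (r e : ℕ) :
    ∃ c' ∈ varIdeal (Fin n) k ^ 3, colength (2 ^ e) (suspension (Fin (r + 1)) c') ≤
      colength (2 ^ e) (suspension (Fin r) c) := by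
  obtain ⟨G, hG⟩ := exists_add_smul_contactEquiv_suspension hn hc hQ
  obtain ⟨t, ht, hle⟩ :=
    exists_ne_zero_colength_add_smul_le (2 ^ e) (suspension (Fin r) c) (rename inr G)
  obtain ⟨c', hc', hcc'⟩ := hG t ht
  refine ⟨c', hc', ?_⟩
  rwa [← map_smul, ← suspension_add,
    (contactEquiv_suspension_fin_succ hcc' r).colength_eq 2 e] at hle

end Degeneration

section Induction

variable {k : Type*} [Field k] [CharP k 2] [IsAlgClosed k]

lemma exists_colength_suspension_le_of_mem_pow_three (s j : ℕ) {r : ℕ}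
    {c : MvPowerSeries (Fin (s + 2 * j)) k} (hc : c ∈ varIdeal _ k ^ 3) (e : ℕ) :
    ∃ c' ∈ varIdeal (Fin s) k ^ 3, colength (2 ^ e) (suspension (Fin (r + j)) c') ≤
      colength (2 ^ e) (suspension (Fin r) c) := by
  induction j generalizing r with
  | zero => exact ⟨c, hc, le_rfl⟩
  | succ j ih =>
    have hzero : HasQuadraticPart c 0 := ⟨0, by simp, by simpa using hc⟩
    obtain ⟨c₁, hc₁, hle₁⟩ := exists_colength_suspension_le (n := s + 2 * j)
      (by rw [Nat.card_fin]; lia) hzero (by simp [polar]) r e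
    obtain ⟨c', hc', hle'⟩ := ih (r := r + 1) hc₁
    rw [Nat.add_right_comm r 1 j] at hle'
    exact ⟨c', hc', hle'.trans hle₁⟩

/-- Hyperbolic planes split off until `s` variables remain or the quadratic part has vanishing
polar form. In the latter case the remaining planes are obtained by deforming, and then the
residual series can be taken in `𝔪 ^ 3`. -/
theorem contactEquiv_suspension_or_colength_suspension_le (s j : ℕ) {r : ℕ}
    {c : MvPowerSeries (Fin (s + 2 * j)) k} (hc : c ∈ varIdeal _ k ^ 2) :
    (∃ c' ∈ varIdeal (Fin s) k ^ 2,
      ContactEquiv (suspension (Fin r) c) (suspension (Fin (r + j)) c')) ∨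
    ∀ e, ∃ c' ∈ varIdeal (Fin s) k ^ 3, colength (2 ^ e) (suspension (Fin (r + j)) c') ≤
      colength (2 ^ e) (suspension (Fin r) c) := by
  induction j generalizing r with
  | zero => exact .inl ⟨c, hc, .of_algEquiv .refl⟩
  | succ j ih =>
    have hcard : Nat.card (Fin (s + 2 * (j + 1))) = s + 2 * j + 2 := by rw [Nat.card_fin]; lia
    rw [show r + (j + 1) = r + 1 + j by lia]
    obtain ⟨Q, hQ⟩ := exists_hasQuadraticPart hc
    by_cases hpolar : ∀ u v, polar Q u v = 0
    · refine .inr fun e => ?_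
      obtain ⟨c₁, hc₁, hle₁⟩ := exists_colength_suspension_le hcard hQ hpolar r e
      obtain ⟨c', hc', hle'⟩ := exists_colength_suspension_le_of_mem_pow_three s j hc₁ e
      exact ⟨c', hc', hle'.trans hle₁⟩
    · push Not at hpolar
      obtain ⟨u, v, huv⟩ := hpolar
      obtain ⟨c₁, hc₁, hcc₁⟩ := exists_contactEquiv_suspension_of_polar_ne_zero hcard hQ huv
      have hcc₁ := contactEquiv_suspension_fin_succ hcc₁ r
      obtain ⟨c', hc', hcc'⟩ | hle := ih (r := r + 1) hc₁
      · exact .inl ⟨c', hc', hcc₁.trans hcc'⟩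
      · exact .inr fun e => hcc₁.colength_eq 2 e ▸ hle e

end Induction

section Triangular

variable {k V P : Type*} [Field k] [AddCommGroup V] [Module k V]
  [FiniteDimensional k V]

lemma charpoly_eq_prod_of_weight [Fintype P] (b : Module.Basis P k V)
    (S : Module.End k V) (w : P → ℕ)
    (h : ∀ p p', p' ≠ p → w p' ≤ w p → b.repr (S (b p)) p' = 0) :
    S.charpoly = ∏ p, (Polynomial.X - Polynomial.C (b.repr (S (b p)) p)) := by
  classical
  let key (p : P) := toLex (OrderDual.toDual (w p), Fintype.equivFin P p)
  have hkey : Function.Injective key := fun p p' hpp' =>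
    (Fintype.equivFin P).injective (congrArg (fun x => (ofLex x).2) hpp')
  let _ : LinearOrder P := LinearOrder.lift' key hkey
  have hupper : (LinearMap.toMatrix b b S).IsUpperTriangular := fun p' p hlt => by
    rw [LinearMap.toMatrix_apply]
    have hlt' : key p < key p' := hlt
    refine h p p' (fun heq => hlt'.ne (congrArg key heq.symm)) ?_
    exact OrderDual.toDual_le_toDual.1 (Prod.Lex.monotone_fst _ _ hlt'.le)
  rw [← LinearMap.charpoly_toMatrix S b, Matrix.charpoly_of_isUpperTriangular _ hupper]
  simp only [LinearMap.toMatrix_apply]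

lemma isSemisimple_sum {ι : Type*} [PerfectField k]
    {S : ι → Module.End k V} (hcomm : ∀ i j, Commute (S i) (S j))
    (hS : ∀ i, (S i).IsSemisimple) (s : Finset ι) : (∑ i ∈ s, S i).IsSemisimple := by
  classical
  induction s using Finset.induction with
  | empty => simp
  | insert i s hi ih =>
    rw [Finset.sum_insert hi]
    exact (hS i).add_of_commute (Commute.sum_right _ _ _ fun j _ => hcomm i j) ih

lemma finrank_ker_eq_card_of_isSemisimple [Finite P] (b : Module.Basis P k V)
    {S : Module.End k V} (hS : S.IsSemisimple) (w : P → ℕ)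
    (h : ∀ p p', p' ≠ p → w p' ≤ w p → b.repr (S (b p)) p' = 0) :
    Module.finrank k S.ker = Nat.card {p // b.repr (S (b p)) p = 0} := by
  classical
  have := Fintype.ofFinite P
  rw [← Module.End.eigenspace_zero, ← hS.isFinitelySemisimple.maxGenEigenspace_eq_eigenspace,
    S.finrank_maxGenEigenspace_eq, charpoly_eq_prod_of_weight b S w h, ← Polynomial.count_roots,
    Polynomial.roots_prod _ _ (Finset.prod_ne_zero_iff.2 fun p _ => Polynomial.X_sub_C_ne_zero _)]
  simp only [Polynomial.roots_X_sub_C, Multiset.bind_singleton, Multiset.count_map]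
  rw [Nat.card_eq_fintype_card, Fintype.card_subtype]
  simp only [Finset.card_def, Finset.filter_val, eq_comm]

end Triangular

section Shift

variable {k V P ι : Type*} [Field k] [AddCommGroup V] [Module k V]
  (b : Module.Basis P k V) (o : P → ι → ℕ) (T : ι → Module.End k V)

/-- The `T i` act on the basis `b` by partial shifts: each basis vector `b p` has a level `o p i`
with respect to every `T i`, and `T i` either kills it or moves it to a basis vector of the next
level, without changing its level with respect to the other `T j`. -/
def IsShiftFamily : Prop :=
  open Classical in ∀ i p, T i (b p) = 0 ∨ ∃ p', T i (b p) = b p' ∧ o p' = o p + Pi.single i 1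

/-- The diagonal operator with eigenvalue `ν (o p i)` on `b p`. -/
noncomputable def levelEnd (ν : ℕ → k) (i : ι) : Module.End k V :=
  b.constr k fun p => ν (o p i) • b p

@[simp]
lemma levelEnd_basis (ν : ℕ → k) (i : ι) (p : P) : levelEnd b o ν i (b p) = ν (o p i) • b p :=
  b.constr_basis k _ p

variable {b o T}

namespace IsShiftFamily

variable (hT : IsShiftFamily b o T)

include hT

lemma commute_levelEnd (ν : ℕ → k) {i j : ι} (hij : i ≠ j) :
    Commute (T i) (levelEnd b o ν j) := by
  refine b.ext fun p => ?_
  obtain h | ⟨p', h, hp'⟩ := hT i p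
  · simp [h]
  · simp [h, hp', hij]

lemma commute_add_levelEnd (hcomm : ∀ i j, Commute (T i) (T j)) (ν : ℕ → k) (i j : ι) :
    Commute (T i + levelEnd b o ν i) (T j + levelEnd b o ν j) := by
  obtain rfl | hij := eq_or_ne i j
  · rfl
  · have hlevel : Commute (levelEnd b o ν i) (levelEnd b o ν j) :=
      b.ext fun p => by simp [smul_smul, mul_comm]
    exact .add_left ((hcomm i j).add_right (hT.commute_levelEnd ν hij))
      ((hT.commute_levelEnd ν hij.symm).symm.add_right hlevel)

/-- `T i + levelEnd b o ν i - ν n` sends a basis vector of level `n` to one of level `n + 1`. -/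
lemma aeval_prod_X_sub_C_apply {Q : ℕ} (hQ : ∀ p i, o p i < Q) (ν : ℕ → k) (i : ι) {m : ℕ}
    {p : P} (hm : o p i + m = Q) :
    Polynomial.aeval (T i + levelEnd b o ν i)
      (∏ n ∈ Finset.Ico (o p i) Q, (Polynomial.X - Polynomial.C (ν n))) (b p) = 0 := by
  induction m generalizing p with
  | zero => exact absurd (hQ p i) (by lia)
  | succ m ih =>
    have hstep : Polynomial.aeval (T i + levelEnd b o ν i)
        (Polynomial.X - Polynomial.C (ν (o p i))) (b p) = T i (b p) := by
      simp
    rw [Finset.prod_eq_prod_Ico_succ_bot (hQ p i), mul_comm, map_mul, Module.End.mul_apply, hstep]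
    obtain h | ⟨p', h, hp'⟩ := hT i p
    · rw [h, map_zero]
    · have hlevel : o p' i = o p i + 1 := by simp [hp']
      rw [h, ← hlevel]
      exact ih (by lia)

lemma isSemisimple_add_levelEnd {Q : ℕ} (hQ : ∀ p i, o p i < Q) {ν : ℕ → k}
    (hν : Set.InjOn ν (Set.Iio Q)) (i : ι) : (T i + levelEnd b o ν i).IsSemisimple := by
  have hsep : (∏ n ∈ Finset.range Q, (Polynomial.X - Polynomial.C (ν n))).Separable :=
    Polynomial.separable_prod_X_sub_C_iff'.2 fun n hn m hm =>
      hν (Finset.mem_range.1 hn) (Finset.mem_range.1 hm)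
  refine Module.End.isSemisimple_of_squarefree_aeval_eq_zero hsep.squarefree (b.ext fun p => ?_)
  rw [Finset.range_eq_Ico, ← Finset.prod_Ico_consecutive _ (Nat.zero_le _) (hQ p i).le, map_mul,
    Module.End.mul_apply, hT.aeval_prod_X_sub_C_apply hQ ν i (Nat.add_sub_of_le (hQ p i).le),
    map_zero, LinearMap.zero_apply]

lemma repr_apply_of_le [Fintype ι] {i : ι} {p p' : P} (hle : ∑ j, o p' j ≤ ∑ j, o p j) :
    b.repr (T i (b p)) p' = 0 := by
  classical
  obtain h | ⟨p'', h, hp''⟩ := hT i p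
  · simp [h]
  · rw [h, Module.Basis.repr_self, Finsupp.single_eq_of_ne]
    rintro rfl
    have hsum : ∑ j, o p' j = ∑ j, o p j + 1 := by
      simp [hp'', Finset.sum_add_distrib]
    lia

lemma repr_sum_add_levelEnd [Fintype ι] (ν : ℕ → k) {p p' : P}
    (hle : ∑ j, o p' j ≤ ∑ j, o p j) :
    b.repr ((∑ i, (T i + levelEnd b o ν i)) (b p)) p' = Finsupp.single p (∑ i, ν (o p i)) p' := by
  classical
  simp [LinearMap.sum_apply, Finsupp.finsetSum_apply, hT.repr_apply_of_le hle,
    Finsupp.single_apply]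

/-- A small multiple of the diagonal operators `levelEnd b o ν i` deforms `∑ i, T i` into a
semisimple operator that is triangular with respect to `∑ i, o p i`, while the kernel does not
grow. -/
theorem card_le_finrank_ker [Fintype ι] [Finite P] [Infinite k] [PerfectField k]
    (hcomm : ∀ i j, Commute (T i) (T j))
    {Q : ℕ} (hQ : ∀ p i, o p i < Q) {ν : ℕ → k} (hν : Set.InjOn ν (Set.Iio Q)) :
    Nat.card {p // ∑ i, ν (o p i) = 0} ≤ Module.finrank k (∑ i, T i : Module.End k V).ker := by
  have := Fintype.ofFinite P
  have := Module.Finite.of_basis b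
  obtain ⟨t, ht⟩ := ((finite_setOf_finrank_ker_lt_finrank_ker_add_smul (∑ i, T i)
    (∑ i, levelEnd b o ν i)).insert 0).infinite_compl.nonempty
  obtain ⟨ht0, ht⟩ : t ≠ 0 ∧ _ := by simpa [not_or] using ht
  have hlevel (i : ι) : levelEnd b o (t • ν) i = t • levelEnd b o ν i :=
    b.ext fun p => by simp [smul_smul]
  have hsemi : (∑ i, (T i + levelEnd b o (t • ν) i)).IsSemisimple :=
    isSemisimple_sum (hT.commute_add_levelEnd hcomm _)
      (hT.isSemisimple_add_levelEnd hQ fun n hn m hm h => hν hn hm (by simpa [ht0] using h)) _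
  have hcard := finrank_ker_eq_card_of_isSemisimple b hsemi (fun p => ∑ i, o p i)
    fun p p' hne hle => by
      rw [hT.repr_sum_add_levelEnd _ hle, Finsupp.single_eq_of_ne hne]
  have hdiag (p : P) : b.repr ((∑ i, (T i + levelEnd b o (t • ν) i)) (b p)) p = 0 ↔
      ∑ i, ν (o p i) = 0 := by
    rw [hT.repr_sum_add_levelEnd _ le_rfl, Finsupp.single_eq_same]
    simp [← Finset.mul_sum, ht0]
  simp only [hdiag] at hcard
  rw [← hcard]
  rwa [Finset.sum_add_distrib, Finset.sum_congr rfl fun i _ => hlevel i, ← Finset.smul_sum]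

end IsShiftFamily

end Shift

section Walsh

variable {e : ℕ}

/-- The Walsh character of `(ZMod 2) ^ e` attached to a set `S` of coordinates:
`g ↦ (-1) ^ ∑ b ∈ S, g b`. -/
def walshChar (S : Finset (Fin e)) : AddChar (Fin e → ZMod 2) ℤ where
  toFun g := ∏ b ∈ S, (-1) ^ (g b).val
  map_zero_eq_one' := by simp
  map_add_eq_mul' g h := by
    have hsign : ∀ x y : ZMod 2, (-1 : ℤ) ^ (x + y).val = (-1) ^ x.val * (-1) ^ y.val := by decide
    simp only [Pi.add_apply, hsign, Finset.prod_mul_distrib]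

lemma walshChar_apply (S : Finset (Fin e)) (g : Fin e → ZMod 2) :
    walshChar S g = ∏ b ∈ S, (-1) ^ (g b).val := rfl

lemma walshChar_mul_walshChar (S T : Finset (Fin e)) :
    walshChar S * walshChar T = walshChar (symmDiff S T) := by
  ext g
  have hsq (b : Fin e) : (-1 : ℤ) ^ (g b).val * (-1) ^ (g b).val = 1 := by simp [← mul_pow]
  have huniv (U : Finset (Fin e)) :
      walshChar U g = ∏ b, if b ∈ U then (-1) ^ (g b).val else 1 := by
    simp [walshChar_apply]
  rw [AddChar.mul_apply, huniv, huniv, huniv, ← Finset.prod_mul_distrib]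
  refine Finset.prod_congr rfl fun b _ => ?_
  by_cases hS : b ∈ S <;> by_cases hT : b ∈ T <;> simp [hS, hT, hsq, Finset.mem_symmDiff]

lemma walshChar_eq_zero_iff {S : Finset (Fin e)} : walshChar S = 0 ↔ S = ∅ := by
  refine ⟨fun h => Finset.eq_empty_of_forall_notMem fun b hb => ?_, fun h => by
    ext; simp [h, walshChar_apply]⟩
  have hb' : walshChar S (Pi.single b 1) = -1 := by
    rw [walshChar_apply, Finset.prod_eq_single_of_mem b hb fun c _ hc => by simp [hc]]
    simp [ZMod.val_one]
  rw [h] at hb'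
  simp at hb'

lemma sum_walshChar_mul_walshChar (S T : Finset (Fin e)) :
    ∑ g, walshChar S g * walshChar T g = if S = T then 2 ^ e else 0 := by
  simp only [← AddChar.mul_apply, walshChar_mul_walshChar]
  have hiff : walshChar (symmDiff S T) = 0 ↔ S = T :=
    walshChar_eq_zero_iff.trans symmDiff_eq_bot
  rw [AddChar.sum_eq_ite]
  simp [hiff]

lemma sum_finset_walshChar (g : Fin e → ZMod 2) :
    ∑ S, walshChar S g = if g = 0 then 2 ^ e else 0 := by
  have hsign : ∀ x : ZMod 2, (1 + (-1) ^ x.val : ℤ) = if x = 0 then 2 else 0 := by decide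
  simp only [walshChar_apply]
  rw [← Finset.powerset_univ, ← Finset.prod_one_add]
  simp only [hsign, funext_iff, Pi.zero_apply, Finset.prod_ite_zero]
  simp

variable {ι τ Y : Type*} [Fintype ι] [Fintype τ] [Fintype Y] [DecidableEq τ]

lemma sum_prod_mul_eq_pow_mul_sum [DecidableEq ι] {R : Type*} [CommRing R]
    (f : Y → Y → R) (h : (τ → Y) → R) :
    ∑ p : (ι ⊕ ι) ⊕ τ → Y,
        (∏ i, f (p (.inl (.inl i))) (p (.inl (.inr i)))) * h (p ∘ Sum.inr) =
      (∑ x, ∑ y, f x y) ^ Fintype.card ι * ∑ z, h z := by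
  let E : ((ι ⊕ ι) ⊕ τ → Y) ≃ (ι → Y × Y) × (τ → Y) :=
    (Equiv.sumArrowEquivProdArrow _ _ _).trans
      (((Equiv.sumArrowEquivProdArrow _ _ _).trans
        (Equiv.arrowProdEquivProdArrow _ _ _).symm).prodCongr (.refl _))
  rw [← Finset.card_univ, ← Finset.prod_const, ← Fintype.sum_prod_type', Finset.prod_univ_sum,
    Fintype.piFinset_univ, Finset.sum_mul_sum, ← Fintype.sum_prod_type']
  exact Fintype.sum_equiv E _ _ fun p => rfl

/-- Fourier inversion on `(ZMod 2) ^ e` counts the zeros of a sum of independent terms. -/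
lemma two_pow_mul_card_eq_sum_walshChar (s : Y → Y → Fin e → ZMod 2)
    (g : (τ → Y) → Fin e → ZMod 2) :
    (2 ^ e * Nat.card {p : (ι ⊕ ι) ⊕ τ → Y //
        ∑ i, s (p (.inl (.inl i))) (p (.inl (.inr i))) + g (p ∘ Sum.inr) = 0} : ℤ) =
      ∑ S, (∑ x, ∑ y, walshChar S (s x y)) ^ Fintype.card ι * ∑ z, walshChar S (g z) := by
  classical
  have hwalsh (S : Finset (Fin e)) (p : (ι ⊕ ι) ⊕ τ → Y) :
      (∏ i, walshChar S (s (p (.inl (.inl i))) (p (.inl (.inr i))))) *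
          walshChar S (g (p ∘ Sum.inr)) =
        walshChar S (∑ i, s (p (.inl (.inl i))) (p (.inl (.inr i))) + g (p ∘ Sum.inr)) := by
    rw [AddChar.map_add_eq_mul]
    exact congrArg (· * _) (map_prod (walshChar S).toMonoidHom
      (fun i => Multiplicative.ofAdd (s (p (.inl (.inl i))) (p (.inl (.inr i))))) _).symm
  simp only [← sum_prod_mul_eq_pow_mul_sum (ι := ι) (fun x y => walshChar _ (s x y)), hwalsh]
  rw [Finset.sum_comm]
  simp only [sum_finset_walshChar, Nat.card_eq_fintype_card, Fintype.card_subtype,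
    Finset.sum_ite, Finset.sum_const_zero, add_zero, Finset.sum_const, nsmul_eq_mul]
  exact mul_comm _ _

end Walsh

section BinaryDigits

/-- The vector of the `e` lowest binary digits of `n`. -/
def binaryDigits (e n : ℕ) : Fin e → ZMod 2 := fun b => ((n / 2 ^ (b : ℕ) : ℕ) : ZMod 2)

lemma binaryDigits_eq_finFunctionFinEquiv_symm {e : ℕ} (n : Fin (2 ^ e)) :
    binaryDigits e n = finFunctionFinEquiv.symm n := by
  funext b
  exact ZMod.val_injective 2 (ZMod.val_natCast 2 _)

lemma bijective_binaryDigits (e : ℕ) :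
    Function.Bijective fun n : Fin (2 ^ e) => binaryDigits e n := by
  simp only [binaryDigits_eq_finFunctionFinEquiv_symm]
  exact finFunctionFinEquiv.symm.bijective

lemma injOn_binaryDigits (e : ℕ) : Set.InjOn (binaryDigits e) (Set.Iio (2 ^ e)) :=
  fun n hn m hm h =>
    congrArg Fin.val ((bijective_binaryDigits e).1 (a₁ := ⟨n, hn⟩) (a₂ := ⟨m, hm⟩) h)

lemma sum_two_pow_mul_walshChar_singleton {e : ℕ} (n : Fin (2 ^ e)) :
    ∑ b : Fin e, 2 ^ (b : ℕ) * walshChar {b} (binaryDigits e n) = (2 ^ e - 1 - 2 * n : ℤ) := by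
  have hsign : ∀ x : ZMod 2, (-1 : ℤ) ^ x.val = 1 - 2 * x.val := by decide
  have hn : ∑ b, (binaryDigits e n b).val * 2 ^ (b : ℕ) = (n : ℕ) := by
    rw [binaryDigits_eq_finFunctionFinEquiv_symm]
    exact (finFunctionFinEquiv_apply _).symm.trans
      (congrArg Fin.val (finFunctionFinEquiv.apply_symm_apply n))
  have hgeom : ∑ b : Fin e, (2 : ℤ) ^ (b : ℕ) = 2 ^ e - 1 := by
    rw [Fin.sum_univ_eq_sum_range (fun b => (2 : ℤ) ^ b), ← mul_geom_sum]; norm_num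
  simp only [walshChar_apply, Finset.prod_singleton, hsign]
  rw [← hgeom, ← (congrArg Nat.cast hn : _ = ((n : ℕ) : ℤ)), Nat.cast_sum, Finset.mul_sum,
    ← Finset.sum_sub_distrib]
  exact Finset.sum_congr rfl fun b _ => by push_cast; ring

lemma sum_sum_min {R : Type*} [CommRing R] (f : ℕ → R) (q : ℕ) :
    ∑ x : Fin q, ∑ y : Fin q, f (min x y) = ∑ n : Fin q, (2 * (q - n) - 1) * f n := by
  have hinner (x : ℕ) := Fin.sum_univ_eq_sum_range (fun y => f (min x y)) q
  simp only [hinner]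
  rw [Fin.sum_univ_eq_sum_range (fun x => ∑ y ∈ Finset.range q, f (min x y)),
    Fin.sum_univ_eq_sum_range (fun n => (2 * (q - n : R) - 1) * f n)]
  clear hinner
  induction q with
  | zero => simp
  | succ q ih =>
    have hleft : ∑ x ∈ Finset.range q, f (min x q) = ∑ n ∈ Finset.range q, f n :=
      Finset.sum_congr rfl fun x hx => by rw [min_eq_left (Finset.mem_range.1 hx).le]
    have hright : ∑ y ∈ Finset.range q, f (min q y) = ∑ n ∈ Finset.range q, f n :=
      Finset.sum_congr rfl fun y hy => by rw [min_eq_right (Finset.mem_range.1 hy).le]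
    simp only [Finset.sum_range_succ, Finset.sum_add_distrib, ih, hleft, hright, min_self]
    have hshift : ∑ n ∈ Finset.range q, (2 * ((q + 1 : ℕ) - n : R) - 1) * f n =
        ∑ n ∈ Finset.range q, (2 * (q - n : R) - 1) * f n + 2 * ∑ n ∈ Finset.range q, f n := by
      rw [Finset.mul_sum, ← Finset.sum_add_distrib]
      exact Finset.sum_congr rfl fun n _ => by push_cast; ring
    rw [hshift]
    push_cast
    ring

/-- The number of pairs with minimum `n` is `2 ^ e + ∑ b, 2 ^ b * walshChar {b} (binaryDigits e n)`,
so that its Fourier transform is supported on the sets with at most one element. -/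
lemma sum_sum_walshChar_min {e : ℕ} (S : Finset (Fin e)) :
    ∑ x : Fin (2 ^ e), ∑ y : Fin (2 ^ e), walshChar S (binaryDigits e (min x y)) =
      2 ^ e * ((if S = ∅ then 2 ^ e else 0) + ∑ b, if S = {b} then 2 ^ (b : ℕ) else 0) := by
  have hcount (n : Fin (2 ^ e)) : (2 * ((2 ^ e : ℕ) - n) - 1 : ℤ) =
      2 ^ e * walshChar ∅ (binaryDigits e n) +
        ∑ b : Fin e, 2 ^ (b : ℕ) * walshChar {b} (binaryDigits e n) := by
    rw [sum_two_pow_mul_walshChar_singleton]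
    simp only [walshChar_apply, Finset.prod_empty]
    push_cast
    ring
  have horth (T : Finset (Fin e)) : ∑ n : Fin (2 ^ e),
      walshChar S (binaryDigits e n) * walshChar T (binaryDigits e n) =
        if S = T then 2 ^ e else 0 := by
    rw [← sum_walshChar_mul_walshChar S T]
    exact (bijective_binaryDigits e).sum_comp fun g => walshChar S g * walshChar T g
  rw [sum_sum_min fun n => walshChar S (binaryDigits e n)]
  calc ∑ n : Fin (2 ^ e), (2 * ((2 ^ e : ℕ) - n) - 1 : ℤ) * walshChar S (binaryDigits e n)
      = 2 ^ e * ∑ n : Fin (2 ^ e),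
            walshChar S (binaryDigits e n) * walshChar ∅ (binaryDigits e n) +
          ∑ b : Fin e, 2 ^ (b : ℕ) * ∑ n : Fin (2 ^ e),
            walshChar S (binaryDigits e n) * walshChar {b} (binaryDigits e n) := by
        simp only [hcount, add_mul, Finset.sum_mul, Finset.sum_add_distrib, Finset.mul_sum]
        rw [Finset.sum_comm (s := Finset.univ (α := Fin e))]
        congr 1 <;> simp only [mul_comm, mul_left_comm]
    _ = _ := by
        simp only [horth, mul_add, Finset.mul_sum, mul_ite, mul_zero]
        simp only [mul_comm]

end BinaryDigits

section Counting

lemma neg_one_pow_eq_one_sub (n : ℕ) : (-1 : ℤ) ^ n = 1 - 2 * (n % 2 : ℕ) := by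
  rw [neg_one_pow_eq_pow_mod_two]
  obtain h | h := Nat.mod_two_eq_zero_or_one n <;> simp [h]

lemma walshChar_singleton_binaryDigits {e : ℕ} (b : Fin e) (n : ℕ) :
    walshChar {b} (binaryDigits e n) = (-1) ^ (n / 2 ^ (b : ℕ)) := by
  rw [walshChar_apply, Finset.prod_singleton, binaryDigits, ZMod.val_natCast,
    ← neg_one_pow_eq_pow_mod_two]

lemma sum_range_mul_div {M : Type*} [AddCommMonoid M] (f : ℕ → M) {a : ℕ} (ha : 0 < a) (n : ℕ) :
    ∑ x ∈ Finset.range (a * n), f (x / a) = a • ∑ y ∈ Finset.range n, f y := by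
  induction n with
  | zero => simp
  | succ n ih =>
    have hlast : ∑ x ∈ Finset.range a, f ((a * n + x) / a) = a • f n := by
      rw [Finset.sum_congr rfl fun x hx => by
        rw [Nat.mul_add_div ha, Nat.div_eq_of_lt (Finset.mem_range.1 hx), add_zero]]
      simp
    rw [Nat.mul_succ, Finset.sum_range_add, ih, hlast, Finset.sum_range_succ, nsmul_add]

lemma sum_range_neg_one_pow_div_three (n : ℕ) :
    ∑ y ∈ Finset.range n, (-1 : ℤ) ^ (y / 3) = min (n % 6) (6 - n % 6) := by
  induction n with
  | zero => simp
  | succ n ih =>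
    rw [Finset.sum_range_succ, ih, neg_one_pow_eq_one_sub]
    lia

lemma sum_range_two_pow_neg_one_pow_div_three (j : ℕ) :
    ∑ y ∈ Finset.range (2 ^ (j + 1)), (-1 : ℤ) ^ (y / 3) = 2 := by
  have hmod : 2 ^ (j + 1) % 6 = 2 ∨ 2 ^ (j + 1) % 6 = 4 := by
    induction j with
    | zero => simp
    | succ j ih => rw [pow_succ]; lia
  rw [sum_range_neg_one_pow_div_three]
  lia

lemma sum_walshChar_singleton_div_three {e : ℕ} (b : Fin e) :
    ∑ z : Fin (2 ^ e), walshChar {b} (binaryDigits e (z / 3)) = 2 ^ (b + 1 : ℕ) := by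
  obtain ⟨j, hj⟩ := Nat.exists_eq_add_of_lt b.isLt
  have hpow : 2 ^ e = 2 ^ (b : ℕ) * 2 ^ (j + 1) := by
    rw [← pow_add, ← add_assoc, ← hj]
  simp only [walshChar_singleton_binaryDigits, Nat.div_div_eq_div_mul, mul_comm 3]
  simp only [← Nat.div_div_eq_div_mul]
  rw [Fin.sum_univ_eq_sum_range (fun z => (-1 : ℤ) ^ (z / 2 ^ (b : ℕ) / 3)), hpow,
    sum_range_mul_div (fun y => (-1 : ℤ) ^ (y / 3)) (by positivity),
    sum_range_two_pow_neg_one_pow_div_three, nsmul_eq_mul, pow_succ]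
  norm_cast

lemma two_pow_mul_card_min_div_three {m : ℕ} (hm : m ≠ 0) (e : ℕ) :
    (2 ^ e * Nat.card {p : (Fin m ⊕ Fin m) ⊕ Fin 1 → Fin (2 ^ e) //
        ∑ i, binaryDigits e (min (p (.inl (.inl i))) (p (.inl (.inr i)))) +
          binaryDigits e (p (.inr 0) / 3) = 0} : ℤ) =
      ((2 ^ e) ^ 2) ^ m * 2 ^ e +
        ∑ b ∈ Finset.range e, (2 ^ e * 2 ^ b) ^ m * 2 ^ (b + 1) := by
  classical
  have hfun (S : Finset (Fin e)) : ∑ z : Fin 1 → Fin (2 ^ e), walshChar S (binaryDigits e (z 0 / 3))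
      = ∑ z : Fin (2 ^ e), walshChar S (binaryDigits e (z / 3)) :=
    Fintype.sum_equiv (Equiv.funUnique _ _) _ _ fun _ => rfl
  have hsupp (S : Finset (Fin e)) (hS : S ∉ insert ∅ (Finset.univ.image singleton)) :
      ((if S = ∅ then 2 ^ e else 0) + ∑ b, if S = {b} then 2 ^ (b : ℕ) else 0 : ℤ) = 0 := by
    simp only [Finset.mem_insert, Finset.mem_image, Finset.mem_univ, true_and, not_or,
      not_exists] at hS
    simp [hS.1, fun b => Ne.symm (hS.2 b)]
  have hfourier := two_pow_mul_card_eq_sum_walshChar (ι := Fin m) (τ := Fin 1)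
    (fun x y : Fin (2 ^ e) => binaryDigits e (min x y)) fun z => binaryDigits e (z 0 / 3)
  simp only [sum_sum_walshChar_min, hfun, Fintype.card_fin] at hfourier
  refine hfourier.trans ?_
  rw [← Finset.sum_subset (Finset.subset_univ (insert ∅ (Finset.univ.image singleton)))
      fun S _ hS => by rw [hsupp S hS, mul_zero, zero_pow hm, zero_mul],
    Finset.sum_insert (by simp), Finset.sum_image Finset.singleton_injective.injOn]
  simp only [sum_walshChar_singleton_div_three]
  rw [← Fin.sum_univ_eq_sum_range fun b => ((2 : ℤ) ^ e * 2 ^ b) ^ m * 2 ^ (b + 1)]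
  congr 1
  · simp [walshChar_apply, sq]
  · simp

lemma sum_fin_two_mul_div {h : ℕ} (hh : 0 < h) : ∑ x : Fin (2 * h), (x / h : ℕ) = h := by
  rw [Fin.sum_univ_eq_sum_range (· / h), mul_comm, sum_range_mul_div (fun x => x) hh]
  simp [Finset.sum_range_succ]

lemma sum_sum_walshChar_min_div {h : ℕ} (hh : 0 < h) :
    ∑ x : Fin (2 * h), ∑ y : Fin (2 * h),
      walshChar {(0 : Fin 1)} (binaryDigits 1 (min (x : ℕ) y / h)) = 2 * h ^ 2 := by
  have hsign (x y : Fin (2 * h)) : walshChar {(0 : Fin 1)} (binaryDigits 1 (min (x : ℕ) y / h)) =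
      1 - 2 * ((x / h : ℕ) * (y / h : ℕ) : ℤ) := by
    have hx : (x / h : ℕ) < 2 := Nat.div_lt_of_lt_mul (by lia)
    have hy : (y / h : ℕ) < 2 := Nat.div_lt_of_lt_mul (by lia)
    have hmin : min (x : ℕ) y / h = min (x / h) (y / h) :=
      Monotone.map_min fun _ _ => Nat.div_le_div_right
    rw [walshChar_singleton_binaryDigits, hmin]
    generalize (x / h : ℕ) = a at hx
    generalize (y / h : ℕ) = b at hy
    interval_cases a <;> interval_cases b <;> rfl
  have hsum : ∑ x : Fin (2 * h), ((x / h : ℕ) : ℤ) = h := mod_cast sum_fin_two_mul_div hh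
  simp only [hsign, Finset.sum_sub_distrib, ← Finset.mul_sum, ← Finset.sum_mul, hsum,
    Finset.sum_const, Finset.card_univ, Fintype.card_fin, nsmul_eq_mul]
  push_cast
  ring

lemma two_mul_card_min_div {h : ℕ} (hh : 0 < h) (r : ℕ) :
    2 * Nat.card {p : (Fin r ⊕ Fin r) ⊕ Fin 2 → Fin (2 * h) //
        ∑ i, binaryDigits 1 (min (p (.inl (.inl i)) : ℕ) (p (.inl (.inr i))) / h) = 0} =
      (((2 * h) ^ 2) ^ r + (2 * h ^ 2) ^ r) * (2 * h) ^ 2 := by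
  have hfourier := two_pow_mul_card_eq_sum_walshChar (ι := Fin r) (τ := Fin 2)
    (fun x y : Fin (2 * h) => binaryDigits 1 (min (x : ℕ) y / h)) fun _ => 0
  have hfinset : (Finset.univ : Finset (Finset (Fin 1))) = {∅, {0}} := rfl
  have htriv : ∑ x : Fin (2 * h), ∑ y : Fin (2 * h),
      walshChar ∅ (binaryDigits 1 (min (x : ℕ) y / h)) = (2 * h) ^ 2 := by
    simp [walshChar_apply, sq]
  have hconst (S : Finset (Fin 1)) :
      ∑ _z : Fin 2 → Fin (2 * h), walshChar S 0 = (2 * h) ^ 2 := by simp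
  rw [hfinset, Finset.sum_pair (Finset.singleton_ne_empty _).symm, htriv, hconst, hconst,
    sum_sum_walshChar_min_div hh, ← add_mul, pow_one, Fintype.card_fin] at hfourier
  simp only [add_zero] at hfourier
  exact_mod_cast hfourier

end Counting

lemma exists_injective_addMonoidHom (k : Type*) [Field k] [Infinite k] (p : ℕ) [Fact p.Prime]
    [CharP k p] (e : ℕ) : ∃ μ : (Fin e → ZMod p) →+ k, Function.Injective μ := by
  let _ := ZMod.algebra k p
  have hrank : (e : Cardinal) ≤ Module.rank (ZMod p) k := by
    by_contra! h
    have := Module.rank_lt_aleph0_iff.1 (h.trans Cardinal.natCast_lt_aleph0)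
    have := Module.finite_of_finite (ZMod p) (M := k)
    exact not_finite k
  obtain ⟨v, hv⟩ := exists_linearIndependent_of_le_rank hrank
  exact ⟨(Fintype.linearCombination (ZMod p) v).toAddMonoidHom,
    hv.fintypeLinearCombination_injective⟩

section Monomials

variable {σ k ι : Type*} [Finite σ] [Field k] {a : ι → σ →₀ ℕ} {o : (σ →₀ ℕ) → ι → ℕ}

lemma isShiftFamily_mulEnd_monomial [DecidableEq ι] (ho : ∀ i p, o (p + a i) = o p + Pi.single i 1)
    (q : ℕ) :
    IsShiftFamily (monomialBasis σ k q) (fun p => o (boxExponent p))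
      fun i => mulEnd q (monomial (a i) 1) := by
  intro i p
  rw [monomialBasis_apply, mulEnd_mk, monomial_mul_monomial, one_mul, add_comm]
  by_cases hp : ∀ j, (boxExponent p + a i) j < q
  · obtain ⟨p', hp'⟩ := exists_boxExponent_eq hp
    refine .inr ⟨p', by rw [monomialBasis_apply, hp'], ?_⟩
    change o (boxExponent p') = _
    rw [hp', ho]
    congr!
  · push Not at hp
    obtain ⟨j, hj⟩ := hp
    exact .inl (mk_monomial_eq_zero hj)

theorem card_le_colength_sum_monomial [Fintype ι] [DecidableEq ι] [IsAlgClosed k] [CharP k 2]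
    (ho : ∀ i p, o (p + a i) = o p + Pi.single i 1) {q e : ℕ}
    (he : ∀ (p : σ → Fin q) i, o (boxExponent p) i < 2 ^ e) :
    Nat.card {p : σ → Fin q // ∑ i, binaryDigits e (o (boxExponent p) i) = 0} ≤
      colength q (∑ i, monomial (a i) (1 : k)) := by
  have : Infinite k := IsAlgClosed.instInfinite
  obtain ⟨μ, hμ⟩ := exists_injective_addMonoidHom k 2 e
  have hcard := (isShiftFamily_mulEnd_monomial (k := k) ho q).card_le_finrank_ker
    (fun i j => LinearMap.ext fun x => by simp [mulEnd, mul_left_comm]) he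
    (hμ.comp_injOn (injOn_binaryDigits e))
  have hsum : ∑ i, mulEnd q (monomial (a i) (1 : k)) = mulEnd q (∑ i, monomial (a i) 1) := by
    refine LinearMap.ext fun x => ?_
    simp [mulEnd, Finset.sum_mul, LinearMap.sum_apply]
  rw [hsum, ← colength_eq_finrank_ker] at hcard
  simpa only [Function.comp_apply, ← map_sum, map_eq_zero_iff μ hμ] using hcard

end Monomials

section Bounds

variable {k : Type*} [Field k] [IsAlgClosed k] [CharP k 2]

/-- The exponent of `(x_i y_i) ^ h`. -/
noncomputable def pairExponent {ι τ : Type*} (h : ℕ) (i : ι) : (ι ⊕ ι) ⊕ τ →₀ ℕ :=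
  Finsupp.single (.inl (.inl i)) h + Finsupp.single (.inl (.inr i)) h

lemma monomial_pairExponent {ι τ R : Type*} [CommRing R] (h : ℕ) (i : ι) :
    monomial (pairExponent (τ := τ) h i) (1 : R) = (X (.inl (.inl i)) * X (.inl (.inr i))) ^ h := by
  rw [pairExponent, mul_pow, X_pow_eq, X_pow_eq, monomial_mul_monomial, one_mul]

lemma min_add_pairExponent_div {ι τ : Type*} [DecidableEq ι] {h : ℕ} (hh : 0 < h) (i j : ι)
    (p : (ι ⊕ ι) ⊕ τ →₀ ℕ) :
    min ((p + pairExponent h i : (ι ⊕ ι) ⊕ τ →₀ ℕ) (.inl (.inl j)))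
        ((p + pairExponent h i : (ι ⊕ ι) ⊕ τ →₀ ℕ) (.inl (.inr j))) / h =
      min (p (.inl (.inl j))) (p (.inl (.inr j))) / h + Pi.single (M := fun _ => ℕ) i 1 j := by
  obtain rfl | hij := eq_or_ne i j
  · simp [pairExponent, min_add_add_right, hh]
  · simp [pairExponent, hij]

lemma card_le_colength_suspension_X_pow_three (m e : ℕ) :
    Nat.card {p : (Fin m ⊕ Fin m) ⊕ Fin 1 → Fin (2 ^ e) //
        ∑ i, binaryDigits e (min (p (.inl (.inl i)) : ℕ) (p (.inl (.inr i)))) +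
          binaryDigits e (p (.inr 0) / 3) = 0} ≤
      colength (2 ^ e) (suspension (Fin m) (X 0 ^ 3 : MvPowerSeries (Fin 1) k)) := by
  let a (i : Option (Fin m)) : (Fin m ⊕ Fin m) ⊕ Fin 1 →₀ ℕ :=
    i.elim (Finsupp.single (.inr 0) 3) (pairExponent 1)
  let o (p : (Fin m ⊕ Fin m) ⊕ Fin 1 →₀ ℕ) (i : Option (Fin m)) : ℕ :=
    i.elim (p (.inr 0) / 3) fun i => min (p (.inl (.inl i))) (p (.inl (.inr i))) / 1
  have ho (i p) : o (p + a i) = o p + Pi.single i 1 := by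
    ext j
    obtain _ | i := i <;> obtain _ | j := j
    · simp [a, o]
    · simp [a, o]
    · simp [a, o, pairExponent]
    · simpa [a, o, Pi.single_apply] using min_add_pairExponent_div one_pos i j p
  have he (p : (Fin m ⊕ Fin m) ⊕ Fin 1 → Fin (2 ^ e)) (i) : o (boxExponent p) i < 2 ^ e := by
    cases i
    · exact (Nat.div_le_self _ _).trans_lt (p _).2
    · simp [o]
  have hF : ∑ i, monomial (a i) (1 : k) = suspension (Fin m) (X 0 ^ 3) := by
    simp [Fintype.sum_option, suspension, a, monomial_pairExponent, ← X_pow_eq, add_comm]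
  simpa [hF, o, Fintype.sum_option, add_comm] using card_le_colength_sum_monomial (k := k) ho he

lemma card_le_colength_sum_pairs_pow (r : ℕ) {h : ℕ} (hh : 0 < h) :
    Nat.card {p : (Fin r ⊕ Fin r) ⊕ Fin 2 → Fin (2 * h) //
        ∑ i, binaryDigits 1 (min (p (.inl (.inl i)) : ℕ) (p (.inl (.inr i))) / h) = 0} ≤
      colength (2 * h) (∑ i : Fin r, (X (.inl (.inl i)) * X (.inl (.inr i)) :
        MvPowerSeries ((Fin r ⊕ Fin r) ⊕ Fin 2) k) ^ h) := by
  simpa [monomial_pairExponent] using card_le_colength_sum_monomial (k := k)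
    (a := pairExponent (ι := Fin r) (τ := Fin 2) h)
    (o := fun p i => min (p (.inl (.inl i))) (p (.inl (.inr i))) / h) (q := 2 * h) (e := 1)
    (fun i p => funext fun j => min_add_pairExponent_div hh i j p)
    (fun p i => Nat.div_lt_of_lt_mul (by simp [mul_comm h]))

end Bounds

section UpperBound

variable {σ k : Type*} [Field k]

lemma mul_pow_card_le (q : ℕ) (a : σ → ℕ) (s : Finset σ) :
    q * q ^ s.card ≤ q * ∏ i ∈ s, (q - a i) + (∑ i ∈ s, a i) * q ^ s.card := by
  classical
  induction s using Finset.induction_on with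
  | empty => simp
  | insert j s hj ih =>
    have hprod : ∏ i ∈ s, (q - a i) ≤ q ^ s.card :=
      Finset.prod_le_pow_card _ _ _ fun i _ => Nat.sub_le q (a i)
    have hq : q ≤ (q - a j) + a j := by lia
    rw [Finset.card_insert_of_notMem hj, Finset.prod_insert hj, Finset.sum_insert hj, pow_succ]
    calc q * (q ^ s.card * q)
        ≤ (q * ∏ i ∈ s, (q - a i) + (∑ i ∈ s, a i) * q ^ s.card) * q := by
          rw [← mul_assoc]
          gcongr
      _ = q * (q * ∏ i ∈ s, (q - a i)) + (∑ i ∈ s, a i) * (q ^ s.card * q) := by ring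
      _ ≤ q * (((q - a j) + a j) * ∏ i ∈ s, (q - a i)) + (∑ i ∈ s, a i) * (q ^ s.card * q) := by
          gcongr
      _ ≤ q * ((q - a j) * ∏ i ∈ s, (q - a i) + a j * q ^ s.card) +
            (∑ i ∈ s, a i) * (q ^ s.card * q) := by
          rw [add_mul (q - a j)]
          gcongr
      _ = _ := by ring

variable [LinearOrder σ] [Finite σ]

lemma mul_notMem_powIdeal {F G : MvPowerSeries σ k} {q : ℕ} {a : σ →₀ ℕ}
    (ha : lexOrder F = toLex a) (hG : G ≠ 0) (hsupp : ∀ b, coeff b G ≠ 0 → ∀ i, a i + b i < q) :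
    F * G ∉ powIdeal σ k q := by
  obtain ⟨b, hb⟩ := exists_finsupp_eq_lexOrder_of_ne_zero hG
  have hbG := coeff_ne_zero_of_lexOrder hb.symm
  refine fun hFG => mul_ne_zero (coeff_ne_zero_of_lexOrder ha.symm) hbG ?_
  rw [← coeff_mul_of_add_lexOrder ha hb]
  exact mem_powIdeal_iff.1 hFG _ (hsupp b hbG)

lemma prod_sub_le_finrank_range_mulEnd [Fintype σ] {F : MvPowerSeries σ k} {a : σ →₀ ℕ}
    (ha : lexOrder F = toLex a) (q : ℕ) :
    ∏ i, (q - a i) ≤ Module.finrank k (mulEnd q F).range := by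
  let boxed (p : (i : σ) → Fin (q - a i)) : σ →₀ ℕ := Finsupp.equivFunOnFinite.symm fun i => p i
  have hboxed : Function.Injective boxed := fun p p' h =>
    funext fun i => Fin.ext (DFunLike.congr_fun h i)
  have hindep : LinearIndependent k fun p =>
      (mulEnd q F).rangeRestrict (Ideal.Quotient.mk _ (monomial (boxed p) 1)) := by
    refine Fintype.linearIndependent_iff.2 fun g hg p₀ => by_contra fun hp₀ => ?_
    have hG : coeff (boxed p₀) (∑ p, monomial (boxed p) (g p)) = g p₀ := by
      simp [coeff_monomial, hboxed.eq_iff]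
    refine mul_notMem_powIdeal (q := q) (G := ∑ p, monomial (boxed p) (g p)) ha
      (fun h => hp₀ (by simpa [h] using hG.symm)) (fun b hb i => ?_) ?_
    · rw [map_sum] at hb
      obtain ⟨p, -, hp⟩ := Finset.exists_ne_zero_of_sum_ne_zero hb
      obtain rfl : b = boxed p := by_contra fun hbp => hp (coeff_monomial_ne hbp _)
      exact Nat.add_lt_of_lt_sub' (p i).2
    · have hmk (p) : g p • Ideal.Quotient.mk (powIdeal σ k q) (monomial (boxed p) 1) =
          Ideal.Quotient.mk _ (monomial (boxed p) (g p)) := by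
        rw [← Ideal.Quotient.mkₐ_eq_mk k, ← map_smul, ← map_smul, smul_eq_mul, mul_one]
      simp only [← map_smul, ← map_sum, hmk] at hg
      rw [← Ideal.Quotient.eq_zero_iff_mem, ← mulEnd_mk]
      exact congrArg Subtype.val hg
  simpa using hindep.fintype_card_le_finrank

theorem exists_mul_colength_le {F : MvPowerSeries σ k} (hF : F ≠ 0) :
    ∃ C, ∀ q, q * colength q F ≤ C * q ^ Nat.card σ := by
  have := Fintype.ofFinite σ
  obtain ⟨a, ha⟩ := exists_finsupp_eq_lexOrder_of_ne_zero hF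
  refine ⟨∑ i, a i, fun q => ?_⟩
  have hcount := mul_pow_card_le q a Finset.univ
  have hrank := Nat.mul_le_mul_left q (prod_sub_le_finrank_range_mulEnd ha q)
  have htotal := congrArg (q * ·) (colength_add_finrank_range_mulEnd q F)
  simp only [mul_add, Nat.card_eq_fintype_card] at htotal
  rw [Finset.card_univ] at hcount
  rw [Nat.card_eq_fintype_card]
  lia

end UpperBound

section Residual

variable {k : Type*} [Field k]

lemma contactEquiv_suspension_X_pow {ι τ : Type*} [Fintype ι] [Unique τ] {n : ℕ}
    {c : MvPowerSeries τ k} (hc : c ∈ varIdeal τ k ^ n)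
    (hn : coeff (Finsupp.single default n) c ≠ 0) :
    ContactEquiv (suspension ι c) (suspension ι (X default ^ n : MvPowerSeries τ k)) := by
  have hdvd : X default ^ n ∣ c := X_pow_dvd_iff.2 fun p hp =>
    mem_varIdeal_pow_iff.1 hc p (by simpa [Finsupp.degree_eq_sum] using hp)
  obtain ⟨w, rfl⟩ := hdvd
  have hw : IsUnit w := by
    rw [isUnit_iff_constantCoeff, isUnit_iff_ne_zero]
    rw [X_pow_eq, coeff_monomial_mul] at hn
    simpa using hn
  exact contactEquiv_suspension_mul_unit _ hw.unit

lemma colength_suspension_X_pow_le {ι τ : Type*} [Fintype ι] [Unique τ] [Infinite k]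
    (p : ℕ) [Fact p.Prime] [CharP k p] {n : ℕ} {c : MvPowerSeries τ k} (hc : c ∈ varIdeal τ k ^ n)
    (e : ℕ) :
    colength (p ^ e) (suspension ι (X default ^ n : MvPowerSeries τ k)) ≤
      colength (p ^ e) (suspension ι c) := by
  by_cases hn : coeff (Finsupp.single default n) c = 0
  · obtain ⟨t, ht, hle⟩ := exists_ne_zero_colength_add_smul_le (p ^ e) (suspension ι c)
      (rename inr (X default ^ n : MvPowerSeries τ k))
    rw [← map_smul, ← suspension_add] at hle
    have hmem : c + t • X default ^ n ∈ varIdeal τ k ^ n :=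
      add_mem hc (Submodule.smul_of_tower_mem _ t (Ideal.pow_mem_pow (X_mem_varIdeal _) n))
    have hcoeff : coeff (Finsupp.single default n) (c + t • X default ^ n) ≠ 0 := by
      simpa [hn, coeff_X_pow] using ht
    rwa [(contactEquiv_suspension_X_pow hmem hcoeff).colength_eq p e] at hle
  · exact ((contactEquiv_suspension_X_pow hc hn).colength_eq p e).ge

end Residual

section FrobeniusPower

variable {σ R : Type*} [CommRing R]

lemma varIdeal_pow_le_powIdeal_two [Finite σ] {n : ℕ} (hn : Nat.card σ < n) :
    varIdeal σ R ^ n ≤ powIdeal σ R 2 := by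
  have := Fintype.ofFinite σ
  refine fun f hf => mem_powIdeal_iff.2 fun p hp => mem_varIdeal_pow_iff.1 hf p (hn.trans_le' ?_)
  rw [Finsupp.degree_eq_sum, Nat.card_eq_fintype_card, ← Finset.card_univ, Finset.card_eq_sum_ones]
  exact Finset.sum_le_sum fun i _ => Nat.le_of_lt_succ (hp i)

lemma mem_varIdeal_pow_succ [Unique σ] {n : ℕ} {f : MvPowerSeries σ R}
    (hf : f ∈ varIdeal σ R ^ n) (hn : coeff (Finsupp.single default n) f = 0) :
    f ∈ varIdeal σ R ^ (n + 1) := mem_varIdeal_pow_iff.2 fun p hp => by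
  obtain hp | rfl := (Nat.le_of_lt_succ hp).lt_or_eq
  · exact mem_varIdeal_pow_iff.1 hf p hp
  · have hdeg : p.degree = p default := by simp [Finsupp.degree_eq_sum]
    rwa [hdeg, ← Finsupp.unique_single] at hn

lemma pow_mem_powIdeal (p : ℕ) [Fact p.Prime] [CharP R p] {q : ℕ} {f : MvPowerSeries σ R}
    (hf : f ∈ powIdeal σ R q) (e : ℕ) : f ^ p ^ e ∈ powIdeal σ R (q * p ^ e) := by
  have : CharP (MvPowerSeries σ R) p := charP_of_injective_ringHom C_injective p
  have hle : powIdeal σ R q ≤ (powIdeal σ R (q * p ^ e)).comap (iterateFrobenius _ p e) := by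
    refine Ideal.span_le.2 ?_
    rintro _ ⟨i, rfl⟩
    simpa [iterateFrobenius_def, ← pow_mul] using X_pow_mem_powIdeal i (q * p ^ e)
  exact hle hf

end FrobeniusPower

section Dichotomy

variable {k : Type*} [Field k] [IsAlgClosed k] [CharP k 2]

lemma HasQuadraticPart.mem_powIdeal_two {σ : Type*} [Finite σ] (hσ : Nat.card σ < 3)
    {c : MvPowerSeries σ k} {Q : QuadraticForm k (σ → k)} (hc : HasQuadraticPart c Q)
    (hQ : ∀ u v, polar Q u v = 0) : c ∈ powIdeal σ k 2 := by
  obtain ⟨p, hp, hcp⟩ := hc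
  obtain ⟨ℓ, hℓ⟩ := exists_dual_sq_eq Q hQ
  obtain ⟨a, ha, ha_mem⟩ := exists_eval_eq_dual ℓ
  obtain rfl : p = a ^ 2 := MvPolynomial.funext fun v => by rw [hp, map_pow, ha, hℓ]
  have hsq : MvPolynomial.aeval X a ^ 2 ^ 1 ∈ powIdeal σ k (1 * 2 ^ 1) :=
    pow_mem_powIdeal 2 (by simpa [powIdeal, varIdeal] using ha_mem) 1
  have := add_mem (varIdeal_pow_le_powIdeal_two hσ hcp) hsq
  simpa using this

variable {n : ℕ} {F : MvPowerSeries (Fin n) k}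

lemma contactEquiv_suspension_or_colength_le (s j : ℕ) (hn : n = s + 2 * j)
    (hF : F ∈ varIdeal (Fin n) k ^ 2) :
    (∃ c ∈ varIdeal (Fin s) k ^ 2, ContactEquiv F (suspension (Fin j) c)) ∨
    ∀ e, ∃ c ∈ varIdeal (Fin s) k ^ 3,
      colength (2 ^ e) (suspension (Fin j) c) ≤ colength (2 ^ e) F := by
  subst hn
  have hF₀ := contactEquiv_suspension_of_isEmpty (ι := Fin 0) F
  obtain ⟨c, hc, hFc⟩ | hle :=
    contactEquiv_suspension_or_colength_suspension_le (r := 0) s j hF <;>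
  rw [zero_add] at *
  · exact .inl ⟨c, hc, hF₀.trans hFc⟩
  · exact .inr fun e => hF₀.colength_eq 2 e ▸ hle e

theorem contactEquiv_suspension_X_sq_or_colength_le (m : ℕ) (hn : n = 2 * m + 1)
    (hF : F ∈ varIdeal (Fin n) k ^ 2) :
    ContactEquiv F (suspension (Fin m) (X 0 ^ 2 : MvPowerSeries (Fin 1) k)) ∨
    ∀ e, colength (2 ^ e) (suspension (Fin m) (X 0 ^ 3 : MvPowerSeries (Fin 1) k)) ≤
      colength (2 ^ e) F := by
  have : Infinite k := IsAlgClosed.instInfinite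
  obtain ⟨c, hc, hFc⟩ | hle := contactEquiv_suspension_or_colength_le 1 m (by lia) hF
  · by_cases hsq : coeff (Finsupp.single 0 2) c = 0
    · have hc₃ := mem_varIdeal_pow_succ hc hsq
      exact .inr fun e => (colength_suspension_X_pow_le 2 hc₃ e).trans (hFc.colength_eq 2 e).ge
    · exact .inl (hFc.trans (contactEquiv_suspension_X_pow hc hsq))
  · refine .inr fun e => ?_
    obtain ⟨c, hc, hcF⟩ := hle e
    exact (colength_suspension_X_pow_le 2 hc e).trans hcF

theorem contactEquiv_suspension_zero_or_colength_le (r : ℕ) (hn : n = 2 * r + 2)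
    (hF : F ∈ varIdeal (Fin n) k ^ 2) :
    ContactEquiv F (suspension (Fin (r + 1)) (0 : MvPowerSeries (Fin 0) k)) ∨
    ∀ e, ∃ c ∈ powIdeal (Fin 2) k 2,
      colength (2 ^ e) (suspension (Fin r) c) ≤ colength (2 ^ e) F := by
  obtain ⟨c, hc, hFc⟩ | hle := contactEquiv_suspension_or_colength_le 2 r (by lia) hF
  · obtain ⟨Q, hQ⟩ := exists_hasQuadraticPart hc
    by_cases hpolar : ∀ u v, polar Q u v = 0
    · exact .inr fun e => ⟨c, hQ.mem_powIdeal_two (by simp) hpolar, (hFc.colength_eq 2 e).ge⟩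
    · push Not at hpolar
      obtain ⟨u, v, huv⟩ := hpolar
      obtain ⟨c', hc', hcc'⟩ :=
        exists_contactEquiv_suspension_of_polar_ne_zero (n := 0) (by simp) hQ huv
      obtain rfl : c' = 0 := ext fun p => mem_varIdeal_pow_iff.1 hc' p (by
        simp [Subsingleton.elim p 0])
      exact .inl (hFc.trans (contactEquiv_suspension_fin_succ hcc' r))
  · refine .inr fun e => ?_
    obtain ⟨c, hc, hcF⟩ := hle e
    exact ⟨c, varIdeal_pow_le_powIdeal_two (by simp) hc, hcF⟩

end Dichotomy

section A1

variable {k : Type*} [Field k]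

/-- The enumeration `x₀, y₀, x₁, y₁, …, z₀, z₁, …` of the variables of a suspension. -/
noncomputable def interleave {m s n : ℕ} (h : 2 * m + s = n) : (Fin m ⊕ Fin m) ⊕ Fin s ≃ Fin n :=
  .ofBijective
    (Sum.elim (Sum.elim (fun i => ⟨2 * i, by lia⟩) fun i => ⟨2 * i + 1, by lia⟩)
      fun t => ⟨2 * m + t, by lia⟩) <| by
    refine (Fintype.bijective_iff_injective_and_card _).2 ⟨?_, by
      simp only [Fintype.card_sum, Fintype.card_fin]; lia⟩
    rintro ((i | i) | t) ((i' | i') | t') hii' <;>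
      simp only [Sum.elim_inl, Sum.elim_inr, Fin.ext_iff, Sum.inl.injEq, Sum.inr.injEq,
        reduceCtorEq] at hii' ⊢ <;> lia

lemma contactEquiv_A1ps_even (m : ℕ) :
    ContactEquiv (suspension (Fin m) (X 0 ^ 2 : MvPowerSeries (Fin 1) k)) (A1ps k (2 * m)) := by
  have hA1 : rename (interleave rfl) (suspension (Fin m) (X 0 ^ 2 : MvPowerSeries (Fin 1) k)) =
      A1ps k (2 * m) := by
    have hm : m = (2 * m + 1) / 2 := by lia
    rw [suspension, A1ps, if_pos (even_two_mul m), map_add, map_sum]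
    refine congrArg₂ (· + ·) (Fintype.sum_equiv (finCongr hm) _ _ fun i => ?_) ?_ <;>
      simp [interleave]
  exact hA1 ▸ contactEquiv_rename _ _

lemma contactEquiv_A1ps_odd (r : ℕ) :
    ContactEquiv (suspension (Fin (r + 1)) (0 : MvPowerSeries (Fin 0) k))
      (A1ps k (2 * r + 1)) := by
  have hA1 : rename (interleave (by lia)) (suspension (Fin (r + 1)) (0 : MvPowerSeries (Fin 0) k)) =
      A1ps k (2 * r + 1) := by
    have hr : r + 1 = (2 * r + 1 + 1) / 2 := by lia
    rw [suspension, A1ps, if_neg (by simp), map_zero, add_zero, add_zero, map_sum]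
    exact Fintype.sum_equiv (finCongr hr) _ _ fun i => by simp [interleave]
  exact hA1 ▸ contactEquiv_rename _ _

end A1

section Limits

variable {k : Type*} [Field k]

lemma le_liminf_colength_div {d : ℕ} {F : MvPowerSeries (Fin (d + 1)) k} (hF : F ≠ 0)
    {u : ℕ → ℝ} {s : ℝ} (hu : Tendsto u atTop (𝓝 s))
    (hle : ∀ᶠ e in atTop, u e ≤ (colength (2 ^ e) F : ℝ) / 2 ^ (d * e)) :
    s ≤ liminf (fun e : ℕ => (colength (2 ^ e) F : ℝ) / 2 ^ (d * e)) atTop := by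
  obtain ⟨C, hC⟩ := exists_mul_colength_le hF
  have hbound (e : ℕ) : (colength (2 ^ e) F : ℝ) / 2 ^ (d * e) ≤ C := by
    have hCe := hC (2 ^ e)
    rw [Nat.card_fin, pow_succ', mul_left_comm, ← pow_mul, mul_comm e] at hCe
    rw [div_le_iff₀ (by positivity)]
    exact_mod_cast Nat.le_of_mul_le_mul_left hCe (by positivity)
  rw [← hu.liminf_eq]
  exact liminf_le_liminf hle hu.isBoundedUnder_ge
    (isBoundedUnder_of ⟨(C : ℝ), hbound⟩).isCoboundedUnder_ge

variable [IsAlgClosed k] [CharP k 2]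

lemma le_colength_suspension_X_pow_three_div {m : ℕ} (hm : m ≠ 0) (e : ℕ) :
    1 + 2 * (1 - ((2 : ℝ) ^ (m + 1))⁻¹ ^ e) / (2 ^ (m + 1) - 1) ≤
      (colength (2 ^ e) (suspension (Fin m) (X 0 ^ 3 : MvPowerSeries (Fin 1) k)) : ℝ) /
        2 ^ (2 * m * e) := by
  have ha : (1 : ℝ) < 2 ^ (m + 1) := one_lt_pow₀ one_lt_two (by lia)
  have hcard := card_le_colength_suspension_X_pow_three (k := k) m e
  have hcount := two_pow_mul_card_min_div_three hm e
  set N := Nat.card _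
  have hgeom : ∑ b ∈ Finset.range e, ((2 : ℝ) ^ e * 2 ^ b) ^ m * 2 ^ (b + 1) =
      2 * (2 ^ e) ^ m * (((2 ^ (m + 1)) ^ e - 1) / (2 ^ (m + 1) - 1)) := by
    rw [← geom_sum_eq ha.ne', Finset.mul_sum]
    exact Finset.sum_congr rfl fun b _ => by ring
  have hN : (2 : ℝ) ^ e * N = 2 ^ e * ((1 + 2 * (1 - ((2 : ℝ) ^ (m + 1))⁻¹ ^ e) /
      (2 ^ (m + 1) - 1)) * 2 ^ (2 * m * e)) := by
    calc (2 : ℝ) ^ e * N = ((2 ^ e) ^ 2) ^ m * 2 ^ e +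
          2 * (2 ^ e) ^ m * (((2 ^ (m + 1)) ^ e - 1) / (2 ^ (m + 1) - 1)) := by
          rw [← hgeom]
          exact_mod_cast hcount
      _ = _ := by
          rw [inv_pow]
          field_simp [sub_ne_zero.2 ha.ne']
          ring
  rw [le_div_iff₀ (by positivity), ← mul_left_cancel₀ (by positivity) hN]
  exact_mod_cast hcard

lemma tendsto_even_bound (m : ℕ) :
    Tendsto (fun e : ℕ => 1 + 2 * (1 - ((2 : ℝ) ^ (m + 1))⁻¹ ^ e) / (2 ^ (m + 1) - 1)) atTop
      (𝓝 ((2 ^ (m + 1) + 1) / (2 ^ (m + 1) - 1))) := by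
  have ha : (1 : ℝ) < 2 ^ (m + 1) := one_lt_pow₀ one_lt_two (by lia)
  have hpow := tendsto_pow_atTop_nhds_zero_of_lt_one (by positivity) (inv_lt_one_of_one_lt₀ ha)
  convert (((hpow.const_sub 1).const_mul 2).div_const ((2 : ℝ) ^ (m + 1) - 1)).const_add 1 using 2
  field [sub_ne_zero.2 ha.ne']

lemma two_pow_mul_le_colength_suspension {r e : ℕ} {c : MvPowerSeries (Fin 2) k}
    (hc : c ∈ powIdeal (Fin 2) k 2) :
    (((2 ^ (e + 1)) ^ 2) ^ r + (2 * (2 ^ e) ^ 2) ^ r) * 2 ^ (e + 1) ≤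
      colength (2 ^ (e + 1)) (suspension (Fin r) c) := by
  have : CharP (MvPowerSeries ((Fin r ⊕ Fin r) ⊕ Fin 2) k) 2 :=
    charP_of_injective_ringHom C_injective 2
  have hrename : rename inr c ∈ powIdeal ((Fin r ⊕ Fin r) ⊕ Fin 2) k 2 :=
    map_powIdeal_le 2 (rename inr) 1 (Ideal.mem_map_of_mem _ hc)
  have hpow : colength (2 * 2 ^ e) (suspension (Fin r) c ^ 2 ^ e) =
      colength (2 * 2 ^ e) (∑ i : Fin r, (X (.inl (.inl i)) * X (.inl (.inr i)) :
        MvPowerSeries ((Fin r ⊕ Fin r) ⊕ Fin 2) k) ^ 2 ^ e) := by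
    refine colength_congr ?_
    rw [suspension, add_pow_char_pow, sum_pow_char_pow, add_sub_cancel_left]
    exact pow_mem_powIdeal 2 hrename e
  have hcard := card_le_colength_sum_pairs_pow (k := k) r (h := 2 ^ e) (by positivity)
  have hcount := two_mul_card_min_div (h := 2 ^ e) (by positivity) r
  have hle := colength_pow_le (2 * 2 ^ e) (2 ^ e) (suspension (Fin r) c)
  rw [pow_succ' 2 e]
  refine Nat.le_of_mul_le_mul_left (c := 2 * 2 ^ e) ?_ (by positivity)
  calc 2 * 2 ^ e * ((((2 * 2 ^ e) ^ 2) ^ r + (2 * (2 ^ e) ^ 2) ^ r) * (2 * 2 ^ e))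
      = (((2 * 2 ^ e) ^ 2) ^ r + (2 * (2 ^ e) ^ 2) ^ r) * (2 * 2 ^ e) ^ 2 := by ring
    _ ≤ 2 * (2 ^ e * colength (2 * 2 ^ e) (suspension (Fin r) c)) := by
      rw [← hcount]
      exact Nat.mul_le_mul_left 2 (hcard.trans (hpow ▸ hle))
    _ = _ := by ring

lemma le_colength_suspension_div {r e : ℕ} {c : MvPowerSeries (Fin 2) k}
    (hc : c ∈ powIdeal (Fin 2) k 2) :
    ((2 : ℝ) ^ r + 1) / 2 ^ r ≤
      (colength (2 ^ (e + 1)) (suspension (Fin r) c) : ℝ) / 2 ^ ((2 * r + 1) * (e + 1)) := by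
  have hle : ((((2 ^ (e + 1)) ^ 2) ^ r + (2 * (2 ^ e) ^ 2) ^ r) * 2 ^ (e + 1) : ℝ) ≤
      colength (2 ^ (e + 1)) (suspension (Fin r) c) :=
    mod_cast two_pow_mul_le_colength_suspension hc
  rw [le_div_iff₀ (by positivity)]
  refine hle.trans' (le_of_eq ?_)
  rw [div_mul_eq_mul_div, div_eq_iff (by positivity), ← pow_mul _ 2 r]
  ring

theorem contactEquiv_A1ps_or_le_liminf_even {m : ℕ} (hm : m ≠ 0)
    {F : MvPowerSeries (Fin (2 * m + 1)) k} (hF : F ∈ varIdeal _ k ^ 2) (hF0 : F ≠ 0) :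
    ContactEquiv F (A1ps k (2 * m)) ∨ (2 ^ (m + 1) + 1) / (2 ^ (m + 1) - 1) ≤
      liminf (fun e : ℕ => (colength (2 ^ e) F : ℝ) / 2 ^ (2 * m * e)) atTop := by
  obtain hA1 | hle := contactEquiv_suspension_X_sq_or_colength_le m rfl hF
  · exact .inl (hA1.trans (contactEquiv_A1ps_even m))
  · refine .inr (le_liminf_colength_div hF0 (tendsto_even_bound m) (.of_forall fun e => ?_))
    exact (le_colength_suspension_X_pow_three_div hm e).trans (by gcongr; exact hle e)

theorem contactEquiv_A1ps_or_le_liminf_odd {r : ℕ}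
    {F : MvPowerSeries (Fin (2 * r + 1 + 1)) k} (hF : F ∈ varIdeal _ k ^ 2) (hF0 : F ≠ 0) :
    ContactEquiv F (A1ps k (2 * r + 1)) ∨ (2 ^ r + 1) / 2 ^ r ≤
      liminf (fun e : ℕ => (colength (2 ^ e) F : ℝ) / 2 ^ ((2 * r + 1) * e)) atTop := by
  obtain hA1 | hle := contactEquiv_suspension_zero_or_colength_le r rfl hF
  · exact .inl (hA1.trans (contactEquiv_A1ps_odd r))
  · refine .inr (le_liminf_colength_div hF0 tendsto_const_nhds ?_)
    filter_upwards [eventually_ge_atTop 1] with e he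
    obtain ⟨e, rfl⟩ := Nat.exists_eq_add_of_le' he
    obtain ⟨c, hc, hcF⟩ := hle (e + 1)
    exact (le_colength_suspension_div hc).trans (by gcongr)

end Limits

end HilbertKunz

/-- A non-regular hypersurface ring of dimension `d ≥ 2` in characteristic 2 is either
isomorphic to the `A₁` singularity, or its (lim inf normalized) Hilbert–Kunz function is
bounded below by `e_HK(S_{2,d})`, which is `(2^{m+1}+1)/(2^{m+1}−1)` for `d = 2m` even
and `(2^{m−1}+1)/2^{m−1}` for `d = 2m−1` odd. -/
theorem hypersurface_dichotomy_char_two (k : Type*) [Field k] [IsAlgClosed k] [CharP k 2]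
    (d : ℕ) (hd : 2 ≤ d) (F : MvPowerSeries (Fin (d + 1)) k)
    (hF2 : F ∈ (Ideal.span
      (Set.range (X : Fin (d + 1) → MvPowerSeries (Fin (d + 1)) k))) ^ 2)
    (hF0 : F ≠ 0) :
    Nonempty ((MvPowerSeries (Fin (d + 1)) k ⧸
        (Ideal.span {F} : Ideal (MvPowerSeries (Fin (d + 1)) k))) ≃+*
      (MvPowerSeries (Fin (d + 1)) k ⧸
        (Ideal.span {A1ps k d} : Ideal (MvPowerSeries (Fin (d + 1)) k)))) ∨
    ((∀ m : ℕ, d = 2 * m →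
        Filter.liminf (fun e : ℕ => (HKps k d 2 e F : ℝ) / 2 ^ (d * e)) Filter.atTop ≥
          (2 ^ (m + 1) + 1) / (2 ^ (m + 1) - 1)) ∧
      (∀ m : ℕ, d = 2 * m - 1 →
        Filter.liminf (fun e : ℕ => (HKps k d 2 e F : ℝ) / 2 ^ (d * e)) Filter.atTop ≥
          (2 ^ (m - 1) + 1) / 2 ^ (m - 1))) := by
  obtain ⟨n, rfl | rfl⟩ := Nat.even_or_odd' d
  · obtain hA1 | hle :=
      HilbertKunz.contactEquiv_A1ps_or_le_liminf_even (by lia : n ≠ 0) hF2 hF0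
    · exact .inl hA1.nonempty_quotient_ringEquiv
    · refine .inr ⟨fun m hm => ?_, fun m hm => by lia⟩
      obtain rfl : n = m := by lia
      exact hle
  · obtain hA1 | hle := HilbertKunz.contactEquiv_A1ps_or_le_liminf_odd hF2 hF0
    · exact .inl hA1.nonempty_quotient_ringEquiv
    · refine .inr ⟨fun m hm => by lia, fun m hm => ?_⟩
      obtain rfl : n = m - 1 := by lia
      exact hle
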